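/- arXiv:1405.0531 — 8 statements merged into one kernel-verified Lean document; each statement's English description precedes it below -/
import Mathlib

section
/- Let S be a commutative ring and let A, B, C, D ∈ S be such that {A,B} and {C,D} are both regular sequences on S. Suppose C = aA + bB and D = cA + dB for elements a, b, c, d ∈ S, and set E := ad − bc. If some entry of the matrix ((a,b),(c,d)) is a nonzerodivisor on S/(A,B), then the colon ideal (C,D) : E equals the ideal (A,B). -/
/-!
Write `E = a * d - b * c` for the determinant of the matrix taking `(A, B)` to `(C, D)`. Cramer's
rule gives `E * (A, B) ⊆ (C, D)`. Conversely, if `f * E = u * C + v * D`, then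
`D * (f * a - v * B) = C * (f * c + u * B)` and `D * (f * b + v * A) = C * (f * d - u * A)`, so
regularity of `D` modulo `C` yields `f * a - v * B = s * C` and `f * b + v * A = t * C`. Adding
`A` times the first to `B` times the second eliminates `v` and leaves `f * C = (s * A + t * B) * C`,
where `C` can be cancelled.
-/

section

open Matrix

variable {S : Type*} [CommRing S]

theorem mul_det_mem_span_range_mulVec {n : Type*} [Fintype n] [DecidableEq n]
    (M : Matrix n n S) (v : n → S) {f : S} (hf : f ∈ Ideal.span (Set.range v)) :
    f * M.det ∈ Ideal.span (Set.range (M *ᵥ v)) := by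
  have cramer : M.adjugate *ᵥ (M *ᵥ v) = M.det • v := by
    rw [mulVec_mulVec, adjugate_mul, smul_mulVec, one_mulVec]
  obtain ⟨r, rfl⟩ := Ideal.mem_span_range_iff_exists_fun.1 hf
  refine Ideal.mem_span_range_iff_exists_fun.2 ⟨r ᵥ* M.adjugate, ?_⟩
  calc r ᵥ* M.adjugate ⬝ᵥ M *ᵥ v = r ⬝ᵥ M.det • v := by rw [← dotProduct_mulVec, cramer]
    _ = (r ⬝ᵥ v) * M.det := by rw [dotProduct_smul, smul_eq_mul, mul_comm]

theorem mul_det_mem_span_pair (a b c d : S) {A B f : S} (hf : f ∈ Ideal.span {A, B}) :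
    f * (a * d - b * c) ∈ Ideal.span {a * A + b * B, c * A + d * B} := by
  have hrange (x y : S) : Set.range ![x, y] = {x, y} := range_cons_cons_empty x y ![]
  have hmulVec : !![a, b; c, d] *ᵥ ![A, B] = ![a * A + b * B, c * A + d * B] := by
    ext i; fin_cases i <;> simp [mulVec]
  rw [← hrange] at hf
  rw [← hrange, ← hmulVec, ← det_fin_two_of]
  exact mul_det_mem_span_range_mulVec _ _ hf

theorem mem_span_pair_of_mul_det_mem {A B C D a b c d f : S}
    (hC : ∀ x : S, C * x = 0 → x = 0)
    (hD : ∀ x : S, D * x ∈ Ideal.span {C} → x ∈ Ideal.span {C})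
    (hCdef : C = a * A + b * B) (hDdef : D = c * A + d * B)
    (hf : f * (a * d - b * c) ∈ Ideal.span {C, D}) : f ∈ Ideal.span {A, B} := by
  obtain ⟨u, v, huv⟩ := Ideal.mem_span_pair.1 hf
  have ha : f * a - v * B ∈ Ideal.span {C} := hD _ <| Ideal.mem_span_singleton'.2
    ⟨f * c + u * B, by linear_combination B * huv + f * c * hCdef - f * a * hDdef⟩
  have hb : f * b + v * A ∈ Ideal.span {C} := hD _ <| Ideal.mem_span_singleton'.2
    ⟨f * d - u * A, by linear_combination -A * huv + f * d * hCdef - f * b * hDdef⟩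
  obtain ⟨s, hs⟩ := Ideal.mem_span_singleton'.1 ha
  obtain ⟨t, ht⟩ := Ideal.mem_span_singleton'.1 hb
  have hcancel : C * (s * A + t * B - f) = 0 := by
    linear_combination A * hs + B * ht - f * hCdef
  exact Ideal.mem_span_pair.2 ⟨s, t, sub_eq_zero.1 (hC _ hcancel)⟩

theorem stmt0_general (A B C D a b c d : S)
    (hC : ∀ x : S, C * x = 0 → x = 0)
    (hD : ∀ x : S, D * x ∈ Ideal.span {C} → x ∈ Ideal.span {C})
    (hCdef : C = a * A + b * B) (hDdef : D = c * A + d * B) :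
    (Ideal.span {C, D}).colon (Ideal.span {a * d - b * c}) = Ideal.span {A, B} := by
  ext f
  rw [Ideal.mem_colon_span_singleton]
  exact ⟨mem_span_pair_of_mul_det_mem hC hD hCdef hDdef,
    fun hf => hCdef ▸ hDdef ▸ mul_det_mem_span_pair a b c d hf⟩

end

/-- Let `S` be a commutative ring, `{A,B}` and `{C,D}` regular
sequences on `S`, with `C = a*A + b*B`, `D = c*A + d*B`.  If some entry of the
matrix `((a,b),(c,d))` is a nonzerodivisor on `S/(A,B)`, then
`(C,D) : E = (A,B)` where `E = a*d - b*c`. -/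
theorem stmt0 {S : Type*} [CommRing S] (A B C D a b c d : S)
    (hA : ∀ x : S, A * x = 0 → x = 0)
    (hB : ∀ x : S, B * x ∈ Ideal.span {A} → x ∈ Ideal.span {A})
    (hC : ∀ x : S, C * x = 0 → x = 0)
    (hD : ∀ x : S, D * x ∈ Ideal.span {C} → x ∈ Ideal.span {C})
    (hCdef : C = a * A + b * B) (hDdef : D = c * A + d * B)
    (hreg : ∃ e ∈ ({a, b, c, d} : Set S),
      ∀ x : S, e * x ∈ Ideal.span {A, B} → x ∈ Ideal.span {A, B}) :
    (Ideal.span {C, D}).colon (Ideal.span {a * d - b * c}) = Ideal.span {A, B} :=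
  stmt0_general A B C D a b c d hC hD hCdef hDdef
end

section
/- With the reparametrization setup, the Rees ideal 𝒥 of I equals the ideal of R[T_1,…,T_{n+1}] generated by the image δ(𝒥') of the Rees ideal 𝒥' of I', i.e., 𝒥 = Ideal.map δ 𝒥'. -/
open MvPolynomial

/-!
Substituting `x_i ↦ x_i ^ c_i` with all `c_i ≠ 0` makes `k[x]` a free module over itself: by
division with remainder by the `c_i`, the monomials `x ^ r` with `r_i < c_i` form a basis. So the
substitution is flat, and the kernel of the Rees map commutes with flat base change. The monomials
generating `I` are the images under it of those generating the reparametrized ideal.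
-/

section ReesIdeal

open scoped TensorProduct

variable {R S ι : Type*}

/-- The map `R[T_j : j ∈ ι] → R[T]`, `T_j ↦ g_j T`, whose image is the Rees algebra of the ideal
generated by the family `g`. -/
noncomputable def reesMap [CommSemiring R] (g : ι → R) : MvPolynomial ι R →ₐ[R] Polynomial R :=
  aeval fun j => Polynomial.C (g j) * Polynomial.X

theorem reesMap_algebraMap_comp [CommSemiring R] [CommSemiring S] [Algebra R S] (g : ι → R) :
    (reesMap (algebraMap R S ∘ g)).comp (algebraTensorAlgEquiv R S).toAlgHom =
      (polyEquivTensor' R S).symm.toAlgHom.comp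
        (Algebra.TensorProduct.map (AlgHom.id S S) (reesMap g)) := by
  ext j : 2
  simp [reesMap, polyEquivTensor']

theorem map_includeRight_map_algebraTensorAlgEquiv [CommSemiring R] [CommSemiring S] [Algebra R S]
    (I : Ideal (MvPolynomial ι R)) :
    (I.map (Algebra.TensorProduct.includeRight : _ →ₐ[R] S ⊗[R] MvPolynomial ι R)).map
        (algebraTensorAlgEquiv R S) = I.map (MvPolynomial.map (algebraMap R S)) := by
  let e := algebraTensorAlgEquiv R S (σ := ι)
  let inr : _ →ₐ[R] S ⊗[R] MvPolynomial ι R := Algebra.TensorProduct.includeRight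
  have comp_inr : (e : _ →+* MvPolynomial ι S).comp (inr : _ →+* S ⊗[R] MvPolynomial ι R) =
      MvPolynomial.map (algebraMap R S) := by
    ext <;> simp [e, inr]
  rw [← comp_inr, ← Ideal.map_map, Ideal.map_coe, Ideal.map_coe]

variable [CommRing R] [CommRing S]

/-- The Rees ideal of the ideal generated by the family `g`: the relations among the `g_j T`. It
depends on the generators, not only on the ideal they generate. -/
noncomputable def reesIdeal (g : ι → R) : Ideal (MvPolynomial ι R) :=
  RingHom.ker (reesMap g).toRingHom

theorem ker_tensorProduct_map_of_flat {A B : Type*} [CommRing A] [CommRing B] [Algebra R A]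
    [Algebra R B] [Algebra R S] [Module.Flat R S] (φ : A →ₐ[R] B) :
    RingHom.ker (Algebra.TensorProduct.map (AlgHom.id S S) φ) =
      (RingHom.ker φ).map (Algebra.TensorProduct.includeRight : A →ₐ[R] S ⊗[R] A) := by
  rw [← Submodule.restrictScalars_inj S]
  exact (Module.Flat.ker_lTensor_eq S S φ.toLinearMap).trans
    (TensorProduct.AlgebraTensorModule.range_lTensor_idealMap S S (RingHom.ker φ))

theorem comap_algebraTensorAlgEquiv_reesIdeal [Algebra R S] (g : ι → R) :
    (reesIdeal (algebraMap R S ∘ g)).comap (algebraTensorAlgEquiv R S) =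
      RingHom.ker (Algebra.TensorProduct.map (AlgHom.id S S) (reesMap g)) := by
  ext t
  have square := DFunLike.congr_fun (reesMap_algebraMap_comp (S := S) g) t
  exact (congrArg (· = 0) square).to_iff.trans
    (EmbeddingLike.map_eq_zero_iff (f := (polyEquivTensor' R S).symm))

theorem reesIdeal_algebraMap_comp [Algebra R S] [Module.Flat R S] (g : ι → R) :
    reesIdeal (algebraMap R S ∘ g) = (reesIdeal g).map (MvPolynomial.map (algebraMap R S)) := by
  rw [← map_includeRight_map_algebraTensorAlgEquiv,
    ← Ideal.map_comap_of_surjective (algebraTensorAlgEquiv R S) (AlgEquiv.surjective _)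
      (reesIdeal (algebraMap R S ∘ g)),
    comap_algebraTensorAlgEquiv_reesIdeal, ker_tensorProduct_map_of_flat]
  rfl

theorem reesIdeal_comp_of_flat {f : R →+* S} (hf : f.Flat) (g : ι → R) :
    reesIdeal (f ∘ g) = (reesIdeal g).map (MvPolynomial.map f) := by
  algebraize [f]
  exact reesIdeal_algebraMap_comp g

end ReesIdeal

-- `k[N]` is free over `k[M]` on the monomials indexed by the transversal `t`.
theorem flat_mapDomainRingHom {k M N T : Type*} [CommRing k] [AddCommMonoid M] [AddCommMonoid N]
    (φ : M →+ N) (t : T → N) (ht : Function.Bijective fun p : T × M => t p.1 + φ p.2) :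
    (AddMonoidAlgebra.mapDomainRingHom k φ).Flat := by
  algebraize [AddMonoidAlgebra.mapDomainRingHom k φ]
  let combination := Finsupp.linearCombination (AddMonoidAlgebra k M)
    fun τ => AddMonoidAlgebra.single (t τ) (1 : k)
  let reindex : (T →₀ AddMonoidAlgebra k M) ≃ₗ[k] AddMonoidAlgebra k N :=
    Finsupp.mapRange.linearEquiv (AddMonoidAlgebra.coeffLinearEquiv k) ≪≫ₗ
      (Finsupp.curryLinearEquiv k).symm ≪≫ₗ Finsupp.domLCongr (Equiv.ofBijective _ ht) ≪≫ₗ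
      (AddMonoidAlgebra.coeffLinearEquiv k).symm
  have combination_eq : ⇑combination = reindex := by
    suffices combination.toAddMonoidHom = reindex.toLinearMap.toAddMonoidHom from
      congrArg DFunLike.coe this
    ext τ m r : 3
    simp [combination, reindex, Algebra.smul_def, RingHom.algebraMap_toAlgebra, add_comm]
  exact Module.Flat.of_linearEquiv
    (LinearEquiv.ofBijective combination (combination_eq ▸ reindex.bijective)).symm

section PowSubst

variable {σ : Type*} (k : Type*)

/-- The substitution `x_i ↦ x_i ^ c_i`, a version of `MvPolynomial.expand` with an exponent for
each variable. Applied to coefficients, it is the endomorphism `δ` of the paper. -/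
noncomputable def powSubst [CommSemiring k] (c : σ → ℕ) : MvPolynomial σ k →ₐ[k] MvPolynomial σ k :=
  aeval fun i => X i ^ c i

theorem powSubst_eq_mapDomainAlgHom [CommSemiring k] (c : σ → ℕ) :
    powSubst k c =
      AddMonoidAlgebra.mapDomainAlgHom k k (DistribSMul.toAddMonoidHom (σ →₀ ℕ) c) := by
  refine algHom_ext fun i => ?_
  have smul_single : c • Finsupp.single i 1 = Finsupp.single i (c i) := by
    classical
    ext j
    simp +contextual [Finsupp.single_apply]
  rw [powSubst, aeval_X, X_pow_eq_monomial, ← smul_single]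
  exact AddMonoidAlgebra.mapDomain_single.symm

theorem bijective_remainder_add_smul {c : σ → ℕ} (hc : ∀ i, c i ≠ 0) :
    Function.Bijective fun p : {r : σ →₀ ℕ // ∀ i, r i < c i} × (σ →₀ ℕ) =>
      p.1.1 + c • p.2 := by
  constructor
  · rintro ⟨⟨r, hr⟩, q⟩ ⟨⟨r', hr'⟩, q'⟩ h
    have division (i) : r i + c i * q i = r' i + c i * q' i := DFunLike.congr_fun h i
    obtain rfl : r = r' := by
      ext i
      simpa [Nat.mod_eq_of_lt, hr i, hr' i] using congrArg (· % c i) (division i)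
    obtain rfl : q = q' := by
      ext i
      simpa [hc i] using division i
    rfl
  · intro m
    refine ⟨⟨⟨.onFinset m.support (fun i => m i % c i) (by aesop), fun i => ?_⟩,
      .onFinset m.support (fun i => m i / c i) (by aesop)⟩, ?_⟩
    · exact Nat.mod_lt _ (Nat.pos_of_ne_zero (hc i))
    · ext i
      simp [Nat.mod_add_div]

theorem flat_powSubst [CommRing k] {c : σ → ℕ} (hc : ∀ i, c i ≠ 0) :
    (powSubst k c : MvPolynomial σ k →+* MvPolynomial σ k).Flat := by
  rw [powSubst_eq_mapDomainAlgHom]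
  exact flat_mapDomainRingHom _ _ (bijective_remainder_add_smul hc)

theorem stmt1_general [CommRing k] {ι : Type*} {c : σ → ℕ} (hc : ∀ i, c i ≠ 0)
    (g : ι → MvPolynomial σ k) :
    reesIdeal (powSubst k c ∘ g) =
      (reesIdeal g).map (MvPolynomial.map (powSubst k c : MvPolynomial σ k →+* MvPolynomial σ k)) :=
  reesIdeal_comp_of_flat (flat_powSubst k hc) g

end PowSubst

section AlmostCompleteIntersection

variable (k : Type*) {n : ℕ}

/-- The generators `x_1 ^ a_1, …, x_n ^ a_n, x_1 ^ b_1 ⋯ x_n ^ b_n` of a monomial almost complete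
intersection, with the mixed monomial last. -/
noncomputable def almostCIGens [CommSemiring k] (a b : Fin n → ℕ) :
    Fin (n + 1) → MvPolynomial (Fin n) k :=
  Fin.snoc (fun i => X i ^ a i) (∏ i, X i ^ b i)

theorem powSubst_comp_almostCIGens [CommSemiring k] (c a b : Fin n → ℕ) :
    powSubst k c ∘ almostCIGens k a b = almostCIGens k (c * a) (c * b) := by
  ext1 j
  cases j using Fin.lastCases <;> simp [almostCIGens, powSubst, pow_mul]

theorem reesIdeal_almostCIGens [CommRing k] (a b : Fin n → ℕ) :
    reesIdeal (almostCIGens k a b) =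
      RingHom.ker (aeval (R := MvPolynomial (Fin n) k)
        (Fin.snoc (fun i : Fin n => Polynomial.C (X i ^ a i) * Polynomial.X)
          (Polynomial.C (∏ i, X i ^ b i) * Polynomial.X) :
          Fin (n + 1) → Polynomial (MvPolynomial (Fin n) k))).toRingHom := by
  rw [reesIdeal, reesMap]
  congr 3
  ext1 j
  cases j using Fin.lastCases <;> simp [almostCIGens]

end AlmostCompleteIntersection

/-- (Reparametrization of monomial almost complete intersections.)
With `I = (x_1^{a_1},…,x_n^{a_n}, x^{b})` and the reparametrized ideal `I'`, the Rees
ideal `𝒥` of `I` equals the ideal generated by the image under `δ` of the Rees ideal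
`𝒥'` of `I'`, i.e. `𝒥 = Ideal.map δ 𝒥'`. -/
theorem stmt1 {k : Type*} [Field k] (n : ℕ) (hn : 2 ≤ n)
    (a b : Fin n → ℕ) (ha : ∀ i, 1 ≤ a i) (hb : ∀ i, b i < a i)
    (htwo : ∃ i j : Fin n, i ≠ j ∧ b i ≠ 0 ∧ b j ≠ 0)
    (a' b' c : Fin n → ℕ)
    (ha' : ∀ i, a' i = if b i = 0 then a i else a i / Nat.gcd (a i) (b i))
    (hb' : ∀ i, b' i = if b i = 0 then 0 else b i / Nat.gcd (a i) (b i))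
    (hc : ∀ i, c i = if b i = 0 then 1 else Nat.gcd (a i) (b i)) :
    let R := MvPolynomial (Fin n) k
    -- the Rees map for `I`
    let ψ : MvPolynomial (Fin (n + 1)) R →ₐ[R] Polynomial R :=
      aeval (Fin.snoc (fun i : Fin n => Polynomial.C (X i ^ a i) * Polynomial.X)
        (Polynomial.C (∏ i, X i ^ b i) * Polynomial.X))
    -- the Rees map for `I'`
    let ψ' : MvPolynomial (Fin (n + 1)) R →ₐ[R] Polynomial R :=
      aeval (Fin.snoc (fun i : Fin n => Polynomial.C (X i ^ a' i) * Polynomial.X)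
        (Polynomial.C (∏ i, X i ^ b' i) * Polynomial.X))
    -- the k-algebra endomorphism `δ` fixing the `T_j` and sending `x_i ↦ x_i^{c_i}`
    let δ : MvPolynomial (Fin (n + 1)) R →+* MvPolynomial (Fin (n + 1)) R :=
      MvPolynomial.map
        ((aeval (fun i : Fin n => (X i : R) ^ c i) : R →ₐ[k] R) : R →+* R)
    RingHom.ker ψ.toRingHom = Ideal.map δ (RingHom.ker ψ'.toRingHom) := by
  intro R ψ ψ' δ
  have c_ne_zero (i) : c i ≠ 0 := by grind [Nat.gcd_eq_zero_iff]
  have c_mul_a' : c * a' = a := by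
    ext i
    rw [Pi.mul_apply]
    grind [Nat.mul_div_cancel', Nat.gcd_dvd_left]
  have c_mul_b' : c * b' = b := by
    ext i
    rw [Pi.mul_apply]
    grind [Nat.mul_div_cancel', Nat.gcd_dvd_right]
  calc RingHom.ker ψ.toRingHom
      = reesIdeal (powSubst k c ∘ almostCIGens k a' b') := by
        rw [powSubst_comp_almostCIGens, c_mul_a', c_mul_b', reesIdeal_almostCIGens]
    _ = (reesIdeal (almostCIGens k a' b')).map δ :=
        stmt1_general k c_ne_zero (almostCIGens k a' b')
    _ = (RingHom.ker ψ'.toRingHom).map δ := by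
        rw [reesIdeal_almostCIGens]
end

section
/- With the reparametrization setup and J = (x_1^{a_1},…,x_n^{a_n}), J' = (x_1^{a'_1},…,x_n^{a'_n}): for every integer r ≥ 0 one has I'^{r+1} = J' I'^r if and only if I^{r+1} = J I^r. In particular, if J' is a reduction of I' then J is a reduction of I and the reduction numbers red_{J'}(I') and red_J(I) coincide. -/
open MvPolynomial

/-
Put `d_i = 1` where `b_i = 0`. The substitution `φ : x_i ↦ x_i ^ d_i` extends `I'` to `I` and `J'`
to `J`, and extension of ideals commutes with products and powers. So it is enough that extension
along `φ` is injective on ideals. This holds because `φ` splits: keeping only the monomials whose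
exponents are divisible by the `d_i`, and dividing these exponents, is a `φ`-linear retraction of
`φ`, so that extending an ideal along `φ` and contracting it again gives the ideal back.
-/

section IdealMap

variable {A B F : Type*} [FunLike F A B]

theorem comap_map_eq_self_of_retraction [Semiring A] [Semiring B] [RingHomClass F A B] {f : F}
    (ρ : B →+ A) (hρ_mul : ∀ b a, ρ (b * f a) = ρ b * a) (hρ_one : ρ 1 = 1) (I : Ideal A) :
    (I.map f).comap f = I := by
  have retraction_mem : ∀ x ∈ I.map f, ρ x ∈ I := by
    intro x hx
    induction hx using Submodule.closure_induction with
    | zero => simp only [map_zero, zero_mem]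
    | add x y _ _ hx hy => simpa only [map_add] using add_mem hx hy
    | smul_mem b _ hx =>
      obtain ⟨a, ha, rfl⟩ := hx
      simpa only [smul_eq_mul, hρ_mul] using I.mul_mem_left (ρ b) ha
  refine le_antisymm (fun a ha => ?_) Ideal.le_comap_map
  have retraction_apply : ρ (f a) = a := by simpa only [one_mul, hρ_one] using hρ_mul 1 a
  exact retraction_apply ▸ retraction_mem (f a) ha

theorem map_pow_succ_eq_map_mul_map_pow_iff [CommSemiring A] [CommSemiring B]
    [RingHomClass F A B] {f : F} (hf : Function.Injective (Ideal.map f)) (I J : Ideal A) (r : ℕ) :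
    I.map f ^ (r + 1) = J.map f * I.map f ^ r ↔ I ^ (r + 1) = J * I ^ r := by
  rw [← Ideal.map_pow, ← Ideal.map_pow, ← Ideal.map_mul, hf.eq_iff]

end IdealMap

section ExpandVars

variable {σ R : Type*} [CommSemiring R] (d : σ → ℕ)

/-- The substitution `x_i ↦ x_i ^ d_i`, the analogue of `MvPolynomial.expand` with a separate
exponent for each variable. -/
noncomputable def expandVars : MvPolynomial σ R →ₐ[R] MvPolynomial σ R :=
  bind₁ fun i => X i ^ d i

theorem expandVars_X_pow (i : σ) (e : ℕ) :
    expandVars d (X i ^ e : MvPolynomial σ R) = X i ^ (d i * e) := by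
  rw [expandVars, map_pow, bind₁_X_right, pow_mul]

theorem expandVars_monomial (m : σ →₀ ℕ) (c : R) :
    expandVars d (monomial m c) = monomial (d • m) c := by
  have support_subset : (d • m).support ⊆ m.support := fun i hi =>
    Finsupp.mem_support_iff.2 (right_ne_zero_of_mul (Finsupp.mem_support_iff.1 hi))
  rw [expandVars, bind₁_monomial, monomial_eq,
    Finsupp.prod_of_support_subset _ support_subset _ fun _ _ => pow_zero _]
  simp only [← pow_mul, Finsupp.coe_pointwise_smul, Pi.smul_apply', smul_eq_mul]

theorem map_expandVars_span_X_pow (a : σ → ℕ) :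
    (Ideal.span (Set.range fun i => (X i ^ a i : MvPolynomial σ R))).map (expandVars d) =
      Ideal.span (Set.range fun i => X i ^ (d i * a i)) := by
  simp only [Ideal.map_span, ← Set.range_comp, Function.comp_def, expandVars_X_pow]

theorem map_expandVars_span_X_pow_union_prod [Fintype σ] (a b : σ → ℕ) :
    (Ideal.span ((Set.range fun i => (X i ^ a i : MvPolynomial σ R)) ∪
        {∏ i, X i ^ b i})).map (expandVars d) =
      Ideal.span ((Set.range fun i => X i ^ (d i * a i)) ∪ {∏ i, X i ^ (d i * b i)}) := by
  rw [Ideal.span_union, Ideal.map_sup, map_expandVars_span_X_pow, Ideal.map_span,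
    Set.image_singleton, ← Ideal.span_union]
  simp only [map_prod, expandVars_X_pow]

variable {d}

theorem finsupp_pointwise_smul_le_iff (hd : ∀ i, d i ≠ 0) {m m' : σ →₀ ℕ} :
    d • m ≤ d • m' ↔ m ≤ m' :=
  forall_congr' fun i => Nat.mul_le_mul_left_iff (Nat.pos_of_ne_zero (hd i))

theorem finsupp_pointwise_smul_injective (hd : ∀ i, d i ≠ 0) :
    Function.Injective fun m : σ →₀ ℕ => d • m :=
  (OrderEmbedding.ofMapLEIff _ fun _ _ => finsupp_pointwise_smul_le_iff hd).injective

/-- The retraction of `expandVars d` that deletes the monomials outside the image of `expandVars d`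
and divides the exponents of the others by `d`. -/
noncomputable def contractVars (hd : ∀ i, d i ≠ 0) :
    MvPolynomial σ R →+ MvPolynomial σ R where
  toFun := AddMonoidAlgebra.comapDomain (d • ·) (finsupp_pointwise_smul_injective hd)
  map_zero' := by ext; rfl
  map_add' _ _ := by ext; rfl

theorem coeff_contractVars (hd : ∀ i, d i ≠ 0) (m : σ →₀ ℕ) (p : MvPolynomial σ R) :
    coeff m (contractVars hd p) = coeff (d • m) p :=
  rfl

theorem contractVars_mul_expandVars (hd : ∀ i, d i ≠ 0) (p q : MvPolynomial σ R) :
    contractVars hd (p * expandVars d q) = contractVars hd p * q := by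
  induction q using MvPolynomial.induction_on' with
  | add q q' hq hq' => simp only [map_add, mul_add, hq, hq']
  | monomial e c =>
    ext m
    have smul_tsub_smul : d • m - d • e = d • (m - e) := by
      ext i
      exact (Nat.mul_sub (d i) (m i) (e i)).symm
    simp only [expandVars_monomial, coeff_contractVars, coeff_mul_monomial',
      finsupp_pointwise_smul_le_iff hd, smul_tsub_smul]

theorem contractVars_one (hd : ∀ i, d i ≠ 0) :
    contractVars hd (1 : MvPolynomial σ R) = 1 := by
  classical
  ext m
  have zero_eq_smul_iff : 0 = d • m ↔ 0 = m :=
    eq_comm.trans (((finsupp_pointwise_smul_injective hd).eq_iff' (smul_zero d)).trans eq_comm)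
  simp only [coeff_contractVars, coeff_one, zero_eq_smul_iff]

theorem map_expandVars_injective (hd : ∀ i, d i ≠ 0) :
    Function.Injective (Ideal.map (expandVars d : MvPolynomial σ R →ₐ[R] MvPolynomial σ R)) :=
  Function.LeftInverse.injective (comap_map_eq_self_of_retraction (contractVars hd)
    (contractVars_mul_expandVars hd) (contractVars_one hd))

end ExpandVars

theorem exists_eq_mul_ite_div_gcd {a b a' b' : ℕ} (ha' : a' = if b = 0 then a else a / a.gcd b)
    (hb' : b' = if b = 0 then 0 else b / a.gcd b) :
    ∃ d, d ≠ 0 ∧ a = d * a' ∧ b = d * b' := by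
  obtain rfl | hb := eq_or_ne b 0
  · exact ⟨1, one_ne_zero, by simp [ha'], by simp [hb']⟩
  · rw [if_neg hb] at ha' hb'
    exact ⟨a.gcd b, Nat.gcd_ne_zero_right hb, ha' ▸ (Nat.mul_div_cancel' (a.gcd_dvd_left b)).symm,
      hb' ▸ (Nat.mul_div_cancel' (a.gcd_dvd_right b)).symm⟩

theorem stmt2_general {R σ : Type*} [CommSemiring R] [Fintype σ] {d a b a' b' : σ → ℕ}
    (hd : ∀ i, d i ≠ 0) (ha : ∀ i, a i = d i * a' i) (hb : ∀ i, b i = d i * b' i) :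
    let I : Ideal (MvPolynomial σ R) :=
      Ideal.span ((Set.range fun i => X i ^ a i) ∪ {∏ i, X i ^ b i})
    let J : Ideal (MvPolynomial σ R) := Ideal.span (Set.range fun i => X i ^ a i)
    let I' : Ideal (MvPolynomial σ R) :=
      Ideal.span ((Set.range fun i => X i ^ a' i) ∪ {∏ i, X i ^ b' i})
    let J' : Ideal (MvPolynomial σ R) := Ideal.span (Set.range fun i => X i ^ a' i)
    (∀ r : ℕ, I' ^ (r + 1) = J' * I' ^ r ↔ I ^ (r + 1) = J * I ^ r) ∧
    ((∃ r : ℕ, I' ^ (r + 1) = J' * I' ^ r) →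
      (∃ r : ℕ, I ^ (r + 1) = J * I ^ r) ∧
      sInf {r : ℕ | I' ^ (r + 1) = J' * I' ^ r} =
        sInf {r : ℕ | I ^ (r + 1) = J * I ^ r}) := by
  intro I J I' J'
  have map_I' : I'.map (expandVars d) = I := by
    simpa only [← ha, ← hb] using map_expandVars_span_X_pow_union_prod d a' b'
  have map_J' : J'.map (expandVars d) = J := by
    simpa only [← ha] using map_expandVars_span_X_pow d a'
  have reduction_iff (r : ℕ) : I' ^ (r + 1) = J' * I' ^ r ↔ I ^ (r + 1) = J * I ^ r := by
    rw [← map_I', ← map_J', map_pow_succ_eq_map_mul_map_pow_iff (map_expandVars_injective hd)]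
  refine ⟨reduction_iff, fun ⟨r, hr⟩ => ⟨⟨r, (reduction_iff r).1 hr⟩, ?_⟩⟩
  simp only [reduction_iff]

/-- With the reparametrization setup: for every `r ≥ 0`,
`I'^{r+1} = J' I'^r ↔ I^{r+1} = J I^r`.  In particular, if `J'` is a reduction of `I'`
then `J` is a reduction of `I` and the reduction numbers coincide. -/
theorem stmt2 {k : Type*} [Field k] (n : ℕ) (hn : 2 ≤ n)
    (a b : Fin n → ℕ) (ha : ∀ i, 1 ≤ a i) (hb : ∀ i, b i < a i)
    (htwo : ∃ i j : Fin n, i ≠ j ∧ b i ≠ 0 ∧ b j ≠ 0)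
    (a' b' : Fin n → ℕ)
    (ha' : ∀ i, a' i = if b i = 0 then a i else a i / Nat.gcd (a i) (b i))
    (hb' : ∀ i, b' i = if b i = 0 then 0 else b i / Nat.gcd (a i) (b i)) :
    let R := MvPolynomial (Fin n) k
    let I : Ideal R :=
      Ideal.span ((Set.range fun i : Fin n => X i ^ a i) ∪ {∏ i, X i ^ b i})
    let J : Ideal R := Ideal.span (Set.range fun i : Fin n => X i ^ a i)
    let I' : Ideal R :=
      Ideal.span ((Set.range fun i : Fin n => X i ^ a' i) ∪ {∏ i, X i ^ b' i})
    let J' : Ideal R := Ideal.span (Set.range fun i : Fin n => X i ^ a' i)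
    (∀ r : ℕ, I' ^ (r + 1) = J' * I' ^ r ↔ I ^ (r + 1) = J * I ^ r) ∧
    ((∃ r : ℕ, I' ^ (r + 1) = J' * I' ^ r) →
      (∃ r : ℕ, I ^ (r + 1) = J * I ^ r) ∧
      sInf {r : ℕ | I' ^ (r + 1) = J' * I' ^ r} =
        sInf {r : ℕ | I ^ (r + 1) = J * I ^ r}) := by
  choose d hd had hbd using fun i => exists_eq_mul_ite_div_gcd (ha' i) (hb' i)
  exact stmt2_general hd had hbd
end

section
/- Suppose J = (x_1^{a_1},…,x_n^{a_n}) is a reduction of I. Then the reduction number red_J(I) equals the least integer r ≥ 1 for which there exist an integer t ≥ 2, distinct indices i_1,…,i_t ∈ {1,…,n}, and positive integers s_{i_1},…,s_{i_t} with s_{i_1} + ⋯ + s_{i_t} = r+1 satisfying (r+1)·b_{i_ℓ} ≥ s_{i_ℓ}·a_{i_ℓ} for every ℓ = 1,…,t. -/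
open MvPolynomial

/-! Writing `m = x^b`, the reduction equation `I^{r+1} = J I^r` amounts to `m^{r+1} ∈ J I^r`. As
`J I^r` is a monomial ideal generated by products of `q + 1 ≥ 1` generators of `J` and `r - q`
copies of `m`, and a common power of `m` can be cancelled from a divisibility, this amounts to
`m^{q+1} ∈ J^{q+1}` for some `q ≤ r`. A monomial lies in `J^{q+1}` iff it is divisible by some
`∏ x_i^{c_i a_i}` with `∑ c_i = q + 1`, so the condition reads `c_i a_i ≤ (q + 1) b_i` for all
`i`. A `c` supported on one index `i` would give `(q + 1) a_i ≤ (q + 1) b_i`, against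
`b_i < a_i`. -/

lemma csInf_upperClosure {α : Type*} [ConditionallyCompleteLattice α] {s : Set α}
    (hne : s.Nonempty) (hbdd : BddBelow s) : sInf (upperClosure s : Set α) = sInf s := by
  refine IsGLB.csInf_eq ?_ (hne.mono subset_upperClosure)
  rw [IsGLB, lowerBounds_upperClosure]
  exact isGLB_csInf hne hbdd

section IdealPowers

variable {S : Type*} [CommSemiring S] (J K : Ideal S)

lemma sup_pow_succ_le (r : ℕ) : (J ⊔ K) ^ (r + 1) ≤ J * (J ⊔ K) ^ r ⊔ K ^ (r + 1) := by
  induction r with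
  | zero => simp
  | succ r ih =>
    have hK : K * (J ⊔ K) ^ (r + 1) ≤ J * (J ⊔ K) ^ (r + 1) ⊔ K ^ (r + 2) :=
      calc K * (J ⊔ K) ^ (r + 1)
        _ ≤ K * (J * (J ⊔ K) ^ r ⊔ K ^ (r + 1)) := Ideal.mul_mono_right ih
        _ = J * (K * (J ⊔ K) ^ r) ⊔ K ^ (r + 2) := by
          rw [Ideal.mul_sup, mul_left_comm, ← pow_succ']
        _ ≤ J * (J ⊔ K) ^ (r + 1) ⊔ K ^ (r + 2) := by
          rw [pow_succ' (J ⊔ K)]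
          gcongr
          exact le_sup_right
    calc (J ⊔ K) ^ (r + 2)
      _ = J * (J ⊔ K) ^ (r + 1) ⊔ K * (J ⊔ K) ^ (r + 1) := by rw [pow_succ', Ideal.sup_mul]
      _ ≤ J * (J ⊔ K) ^ (r + 1) ⊔ K ^ (r + 2) := sup_le le_sup_left hK

variable {J K}

lemma sup_pow_succ_eq_mul_of_pow_le {q r : ℕ} (h : K ^ (q + 1) ≤ J ^ (q + 1)) (hqr : q ≤ r) :
    (J ⊔ K) ^ (r + 1) = J * (J ⊔ K) ^ r := by
  have hK : K ^ (r + 1) ≤ J * (J ⊔ K) ^ r := by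
    obtain ⟨p, rfl⟩ := Nat.exists_eq_add_of_le hqr
    calc K ^ (q + p + 1)
      _ = K ^ (q + 1) * K ^ p := by ring
      _ ≤ J ^ (q + 1) * K ^ p := Ideal.mul_mono_left h
      _ = J * (J ^ q * K ^ p) := by ring
      _ ≤ J * ((J ⊔ K) ^ q * (J ⊔ K) ^ p) := by
        gcongr
        exacts [le_sup_left, le_sup_right]
      _ = J * (J ⊔ K) ^ (q + p) := by rw [pow_add]
  refine le_antisymm ((sup_pow_succ_le J K r).trans (sup_le le_rfl hK)) ?_
  rw [pow_succ']
  exact Ideal.mul_mono_left le_sup_left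

end IdealPowers

section Multiples

open scoped Pointwise

lemma exists_add_nsmul_eq_of_mem_nsmul_insert {M : Type*} [AddCommMonoid M] {A : Set M} {b d : M}
    {n : ℕ} (hd : d ∈ n • insert b A) :
    ∃ p j, p + j = n ∧ ∃ e ∈ p • A, e + j • b = d := by
  induction n generalizing d with
  | zero => exact ⟨0, 0, rfl, 0, by simp, by simpa [eq_comm] using hd⟩
  | succ n ih =>
    rw [succ_nsmul] at hd
    obtain ⟨d, hd, x, hx, rfl⟩ := hd
    obtain ⟨p, j, rfl, e, he, rfl⟩ := ih hd
    rcases hx with rfl | hx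
    · exact ⟨p, j + 1, by ring, e, he, by rw [succ_nsmul, ← add_assoc]⟩
    · refine ⟨p + 1, j, by ring, e + x, ?_, add_right_comm e x _⟩
      rw [succ_nsmul]
      exact Set.add_mem_add he hx

lemma mem_nsmul_range_iff {ι M : Type*} [AddCommMonoid M] {f : ι → M} {n : ℕ} {e : M} :
    e ∈ n • Set.range f ↔ ∃ c : ι →₀ ℕ, c.degree = n ∧ Finsupp.linearCombination ℕ f c = e := by
  constructor
  · intro he
    induction n generalizing e with
    | zero => exact ⟨0, map_zero _, by simpa [eq_comm] using he⟩
    | succ n ih =>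
      rw [succ_nsmul] at he
      obtain ⟨e, he, _, ⟨i, rfl⟩, rfl⟩ := he
      obtain ⟨c, rfl, rfl⟩ := ih he
      exact ⟨c + Finsupp.single i 1, by simp, by simp⟩
  · rintro ⟨c, rfl, rfl⟩
    induction c using Finsupp.induction_linear with
    | zero => simp
    | add c d hc hd =>
      rw [map_add, map_add, add_nsmul]
      exact Set.add_mem_add hc hd
    | single i m =>
      rw [Finsupp.degree_single, Finsupp.linearCombination_single]
      exact Set.nsmul_mem_nsmul (Set.mem_range_self i)

end Multiples

section MonomialIdeal

open scoped Pointwise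

variable {σ k : Type*} [CommSemiring k]

variable (k) in
/-- The monomial ideal generated by the monomials with exponent vectors in `A`. Indexing by exponent
vectors turns products and powers of ideals into pointwise sums and multiples of sets. -/
noncomputable def monomialIdeal (A : Set (σ →₀ ℕ)) : Ideal (MvPolynomial σ k) :=
  Ideal.span ((fun e => monomial e 1) '' A)

lemma monomial_mem_monomialIdeal_iff [Nontrivial k] {A : Set (σ →₀ ℕ)} {e : σ →₀ ℕ} :
    monomial e 1 ∈ monomialIdeal k A ↔ ∃ d ∈ A, d ≤ e := by
  classical
  simp [monomialIdeal, mem_ideal_span_monomial_image, support_monomial]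

lemma monomialIdeal_insert (b : σ →₀ ℕ) (A : Set (σ →₀ ℕ)) :
    monomialIdeal k (insert b A) = monomialIdeal k A ⊔ Ideal.span {monomial b 1} := by
  rw [monomialIdeal, Set.image_insert_eq, Ideal.span_insert, sup_comm, monomialIdeal]

lemma monomialIdeal_add (A B : Set (σ →₀ ℕ)) :
    monomialIdeal k (A + B) = monomialIdeal k A * monomialIdeal k B := by
  simp only [monomialIdeal, Ideal.span_mul_span', ← Set.image2_add, ← Set.image2_mul,
    Set.image_image2, Set.image2_image_left, Set.image2_image_right, monomial_mul, one_mul]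

lemma monomialIdeal_nsmul (A : Set (σ →₀ ℕ)) (n : ℕ) :
    monomialIdeal k (n • A) = monomialIdeal k A ^ n := by
  induction n with
  | zero => simp [monomialIdeal]
  | succ n ih => rw [succ_nsmul, pow_succ, monomialIdeal_add, ih]

lemma span_range_X_pow (a : σ → ℕ) :
    Ideal.span (Set.range fun i => X i ^ a i) =
      monomialIdeal k (Set.range fun i => Finsupp.single i (a i)) := by
  simp only [monomialIdeal, ← Set.range_comp, Function.comp_def, X_pow_eq_monomial]

variable [Nontrivial k]

theorem monomialIdeal_insert_pow_succ_eq_mul_iff {A : Set (σ →₀ ℕ)} {b : σ →₀ ℕ} {r : ℕ} :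
    monomialIdeal k (insert b A) ^ (r + 1) = monomialIdeal k A * monomialIdeal k (insert b A) ^ r ↔
      ∃ q ≤ r, monomial ((q + 1) • b) 1 ∈ monomialIdeal k A ^ (q + 1) := by
  constructor
  · intro h
    have hmem : monomial ((r + 1) • b) 1 ∈ monomialIdeal k (A + r • insert b A) := by
      rw [monomialIdeal_add, monomialIdeal_nsmul, ← h, ← monomialIdeal_nsmul,
        monomial_mem_monomialIdeal_iff]
      exact ⟨_, Set.nsmul_mem_nsmul (Set.mem_insert b A), le_rfl⟩
    obtain ⟨_, ⟨x, hx, d, hd, rfl⟩, hle⟩ := monomial_mem_monomialIdeal_iff.1 hmem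
    obtain ⟨q, j, rfl, e, he, rfl⟩ := exists_add_nsmul_eq_of_mem_nsmul_insert hd
    have hcancel : e + x ≤ (q + 1) • b := by
      refine le_of_add_le_add_right (a := j • b) ?_
      calc e + x + j • b
        _ = x + (e + j • b) := by abel
        _ ≤ (q + j + 1) • b := hle
        _ = (q + 1) • b + j • b := by rw [← add_nsmul, add_right_comm]
    refine ⟨q, Nat.le_add_right q j, ?_⟩
    rw [← monomialIdeal_nsmul, succ_nsmul]
    refine monomial_mem_monomialIdeal_iff.2 ⟨e + x, ?_, hcancel⟩
    exact Set.add_mem_add he hx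
  · rintro ⟨q, hqr, hq⟩
    rw [monomialIdeal_insert]
    refine sup_pow_succ_eq_mul_of_pow_le ?_ hqr
    rwa [Ideal.span_singleton_pow, Ideal.span_singleton_le_iff_mem, monomial_pow, one_pow]

lemma monomial_mem_span_range_X_pow_pow_iff {a : σ → ℕ} {e : σ →₀ ℕ} {n : ℕ} :
    monomial e 1 ∈ Ideal.span (Set.range fun i => (X i ^ a i : MvPolynomial σ k)) ^ n ↔
      ∃ c : σ →₀ ℕ, c.degree = n ∧ ∀ i, c i * a i ≤ e i := by
  classical
  have happly (c : σ →₀ ℕ) (i : σ) :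
      Finsupp.linearCombination ℕ (fun i => Finsupp.single i (a i)) c i = c i * a i := by
    simp +contextual [Finsupp.linearCombination_apply, Finsupp.sum, Finsupp.finsetSum_apply,
      Finsupp.single_apply]
  simp only [span_range_X_pow, ← monomialIdeal_nsmul, monomial_mem_monomialIdeal_iff,
    mem_nsmul_range_iff, Finsupp.le_def]
  constructor
  · rintro ⟨_, ⟨c, hc, rfl⟩, hle⟩
    exact ⟨c, hc, fun i => happly c i ▸ hle i⟩
  · rintro ⟨c, hc, hle⟩
    exact ⟨_, ⟨c, hc, rfl⟩, fun i => (happly c i).trans_le (hle i)⟩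

end MonomialIdeal

section ReductionNumber

variable {σ : Type*}

lemma one_lt_card_support_of_mul_le {a b : σ → ℕ} (hb : ∀ i, b i < a i) {c : σ →₀ ℕ}
    (hc : c ≠ 0) (hle : ∀ i, c i * a i ≤ c.degree * b i) : 1 < c.support.card := by
  by_contra! hcard
  obtain ⟨i, -⟩ := Finsupp.support_nonempty_iff.2 hc
  have : Nonempty σ := ⟨i⟩
  obtain ⟨i, m, rfl⟩ := Finsupp.card_support_le_one'.1 hcard
  have hm : 0 < m := Nat.pos_of_ne_zero (by simpa using hc)
  have hmi : m * a i ≤ m * b i := by simpa using hle i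
  exact (hb i).not_ge (Nat.le_of_mul_le_mul_left hmi hm)

lemma exists_degree_eq_succ_iff_exists_finset {a b : σ → ℕ} (hb : ∀ i, b i < a i) {r : ℕ} :
    (∃ c : σ →₀ ℕ, c.degree = r + 1 ∧ ∀ i, c i * a i ≤ (r + 1) * b i) ↔
      1 ≤ r ∧ ∃ (T : Finset σ) (s : σ → ℕ), 2 ≤ T.card ∧ (∀ i ∈ T, 1 ≤ s i) ∧
        ∑ i ∈ T, s i = r + 1 ∧ ∀ i ∈ T, s i * a i ≤ (r + 1) * b i := by
  classical
  constructor
  · rintro ⟨c, hc, hle⟩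
    have hpos : ∀ i ∈ c.support, 1 ≤ c i := fun i hi =>
      Nat.one_le_iff_ne_zero.2 (Finsupp.mem_support_iff.1 hi)
    have hcard : 2 ≤ c.support.card :=
      one_lt_card_support_of_mul_le hb (by rintro rfl; simp at hc) (hc ▸ hle)
    have hcard_le : c.support.card ≤ r + 1 := by
      simpa [← hc, Finsupp.degree_apply] using Finset.card_nsmul_le_sum _ _ 1 hpos
    exact ⟨by lia, c.support, c, hcard, hpos, hc, fun i _ => hle i⟩
  · rintro ⟨-, T, s, -, -, hsum, hle⟩
    refine ⟨∑ i ∈ T, Finsupp.single i (s i), by simpa using hsum, fun i => ?_⟩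
    by_cases hi : i ∈ T
    · simpa [Finsupp.finsetSum_apply, Finsupp.single_apply, hi] using hle i hi
    · simp [Finsupp.finsetSum_apply, Finsupp.single_apply, hi]

theorem setOf_pow_succ_eq_mul_eq_upperClosure {k : Type*} [CommSemiring k] [Nontrivial k]
    (a : σ → ℕ) (b : σ →₀ ℕ) :
    let I : Ideal (MvPolynomial σ k) :=
      Ideal.span ((Set.range fun i => X i ^ a i) ∪ {monomial b 1})
    let J : Ideal (MvPolynomial σ k) := Ideal.span (Set.range fun i => X i ^ a i)
    {r : ℕ | I ^ (r + 1) = J * I ^ r} =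
      upperClosure {r : ℕ | ∃ c : σ →₀ ℕ, c.degree = r + 1 ∧ ∀ i, c i * a i ≤ (r + 1) * b i} := by
  intro I J
  have hJ : J = monomialIdeal k (Set.range fun i => Finsupp.single i (a i)) := span_range_X_pow a
  have hI : I = monomialIdeal k (insert b (Set.range fun i => Finsupp.single i (a i))) := by
    rw [monomialIdeal_insert, ← span_range_X_pow, ← Ideal.span_union]
  ext r
  rw [Set.mem_ofPred_eq, hI, hJ, monomialIdeal_insert_pow_succ_eq_mul_iff, ← span_range_X_pow]
  simp only [monomial_mem_span_range_X_pow_pow_iff, Finsupp.smul_apply, smul_eq_mul,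
    SetLike.mem_coe, mem_upperClosure, Set.mem_ofPred_eq, and_comm]

theorem stmt3_general {k : Type*} [CommSemiring k] [Nontrivial k]
    (a : σ → ℕ) (b : σ →₀ ℕ) (hb : ∀ i, b i < a i) :
    let I : Ideal (MvPolynomial σ k) :=
      Ideal.span ((Set.range fun i => X i ^ a i) ∪ {monomial b 1})
    let J : Ideal (MvPolynomial σ k) := Ideal.span (Set.range fun i => X i ^ a i)
    (∃ r : ℕ, I ^ (r + 1) = J * I ^ r) →
    sInf {r : ℕ | I ^ (r + 1) = J * I ^ r} =
      sInf {r : ℕ | 1 ≤ r ∧ ∃ (T : Finset σ) (s : σ → ℕ),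
        2 ≤ T.card ∧ (∀ i ∈ T, 1 ≤ s i) ∧ (∑ i ∈ T, s i) = r + 1 ∧
        ∀ i ∈ T, s i * a i ≤ (r + 1) * b i} := by
  rintro I J ⟨r, hr⟩
  simp only [← exists_degree_eq_succ_iff_exists_finset hb]
  have hset := setOf_pow_succ_eq_mul_eq_upperClosure (k := k) a b
  obtain ⟨q, hq, -⟩ := hset.le hr
  rw [hset]
  exact csInf_upperClosure ⟨q, hq⟩ (OrderBot.bddBelow _)

end ReductionNumber

/-- If `J = (x_1^{a_1},…,x_n^{a_n})` is a reduction of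
`I = (x_1^{a_1},…,x_n^{a_n}, x^b)`, then the reduction number `red_J(I)` equals the
least `r ≥ 1` for which there exist `t ≥ 2` distinct indices `i_1,…,i_t` and positive
integers `s_{i_1},…,s_{i_t}` summing to `r+1` with `(r+1)·b_{i_ℓ} ≥ s_{i_ℓ}·a_{i_ℓ}`. -/
theorem stmt3 {k : Type*} [Field k] (n : ℕ) (hn : 2 ≤ n)
    (a b : Fin n → ℕ) (ha : ∀ i, 1 ≤ a i) (hb : ∀ i, b i < a i)
    (htwo : ∃ i j : Fin n, i ≠ j ∧ b i ≠ 0 ∧ b j ≠ 0) :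
    let R := MvPolynomial (Fin n) k
    let I : Ideal R :=
      Ideal.span ((Set.range fun i : Fin n => X i ^ a i) ∪ {∏ i, X i ^ b i})
    let J : Ideal R := Ideal.span (Set.range fun i : Fin n => X i ^ a i)
    (∃ r : ℕ, I ^ (r + 1) = J * I ^ r) →
    sInf {r : ℕ | I ^ (r + 1) = J * I ^ r} =
      sInf {r : ℕ | 1 ≤ r ∧ ∃ (T : Finset (Fin n)) (s : Fin n → ℕ),
        2 ≤ T.card ∧ (∀ i ∈ T, 1 ≤ s i) ∧ (∑ i ∈ T, s i) = r + 1 ∧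
        ∀ i ∈ T, s i * a i ≤ (r + 1) * b i} := by
  simpa [monomial_eq, Finsupp.prod_fintype] using
    stmt3_general (k := k) a (Finsupp.equivFunOnFinite.symm b) hb
end

section
/- For every k with 1 ≤ k ≤ s+2 and every i with 1 ≤ i ≤ c_k: if k is odd then d divides O_{k,i} := d_{k-2} − i d_{k-1} + b(i e_{k-1} + e_{k-2}) and the quotient p_{k,i} := O_{k,i}/d satisfies 0 ≤ p_{k,i} ≤ i e_{k-1} + e_{k-2}; if k is even then d divides E_{k,i} := d_{k-2} − i d_{k-1} + (d−b)(i e_{k-1} + e_{k-2}) and the quotient q_{k,i} := E_{k,i}/d satisfies 0 ≤ q_{k,i} ≤ i e_{k-1} + e_{k-2}. -/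
/-!
The sequences `d_k` and `(-1)^k e_k` satisfy the same recurrence `z_{k-2} = c_k z_{k-1} + z_k`,
hence so does the combination `d_k - (-1)^k b e_k`. Its two initial values are `d` and `0`, so
all its values are multiples of `d`, and with them the combinations of consecutive values that
give `O_{k,i}` and, since `d - b ≡ -b` modulo `d`, also `E_{k,i}`. The quotients are small because
`d_{k-2} - i d_{k-1} < d` while both `b` and `d - b` are at most `d`.
-/

section Recurrence

variable {R : Type*} [CommRing R] {n : ℕ} {c r e : ℕ → R}

theorem dvd_of_recurrence {a : R} (h0 : a ∣ r 0) (h1 : a ∣ r 1)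
    (hr : ∀ j < n, r j = c j * r (j + 1) + r (j + 2)) {m : ℕ} (hm : m ≤ n + 1) : a ∣ r m := by
  induction m using Nat.twoStepInduction with
  | zero => exact h0
  | one => exact h1
  | more j ihj ihj' =>
    have hj : a ∣ c j * r (j + 1) + r (j + 2) := hr j (by omega) ▸ ihj (by omega)
    exact (dvd_add_right ((ihj' (by omega)).mul_left (c j))).1 hj

theorem dvd_add_neg_one_pow_mul (hr : ∀ j < n, r j = c j * r (j + 1) + r (j + 2))
    (he0 : e 0 = 0) (he1 : e 1 = 1) (he : ∀ j < n, e (j + 2) = c j * e (j + 1) + e j)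
    {m : ℕ} (hm : m ≤ n + 1) : r 0 ∣ r m + (-1) ^ m * (r 1 * e m) := by
  refine dvd_of_recurrence (c := c) (r := fun m ↦ r m + (-1) ^ m * (r 1 * e m))
    (by simp [he0]) (by simp [he1]) (fun j hj ↦ ?_) hm
  linear_combination hr j hj - (-1) ^ j * r 1 * he j hj

theorem dvd_sub_mul_add_neg_one_pow_mul (hr : ∀ j < n, r j = c j * r (j + 1) + r (j + 2))
    (he0 : e 0 = 0) (he1 : e 1 = 1) (he : ∀ j < n, e (j + 2) = c j * e (j + 1) + e j)
    {m : ℕ} (hm : m ≤ n) (t : R) :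
    r 0 ∣ r m - t * r (m + 1) + (-1) ^ m * (r 1 * (t * e (m + 1) + e m)) := by
  have hm0 := dvd_add_neg_one_pow_mul hr he0 he1 he (show m ≤ n + 1 by omega)
  have hm1 := dvd_add_neg_one_pow_mul hr he0 he1 he (show m + 1 ≤ n + 1 by omega)
  convert dvd_sub hm0 (hm1.mul_left t) using 1
  ring

end Recurrence

theorem dvd_add_sub_mul_of_intCast_dvd_sub {d b x y : ℕ} (hbd : b ≤ d)
    (h : (d : ℤ) ∣ x - b * y) : d ∣ x + (d - b) * y := by
  have hcast : ((x + (d - b) * y : ℕ) : ℤ) = x - b * y + d * y := by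
    push_cast [hbd]
    ring
  exact Int.natCast_dvd_natCast.1 (hcast ▸ dvd_add h (dvd_mul_right (d : ℤ) y))

theorem add_mul_div_le {d a x : ℕ} (hx : x < d) (ha : a ≤ d) (y : ℕ) : (x + a * y) / d ≤ y := by
  refine Nat.le_of_lt_succ (Nat.div_lt_of_lt_mul ?_)
  calc x + a * y < d + d * y := add_lt_add_of_lt_of_le hx (Nat.mul_le_mul_right y ha)
    _ = d * (y + 1) := by ring

theorem sub_mul_lt_apply_zero {n m i : ℕ} {r : ℕ → ℕ} (h10 : r 1 ≤ r 0)
    (hr : ∀ j < n, r (j + 2) < r (j + 1)) (hm : m < n) (hi : 0 < i) :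
    r m - i * r (m + 1) < r 0 := by
  have hanti : AntitoneOn r (Set.Iic (n + 1)) :=
    antitoneOn_of_add_one_le Set.ordConnected_Iic fun j _ _ hj ↦
      match j, hj with
      | 0, _ => h10
      | j + 1, hj => (hr j (Nat.lt_of_succ_lt_succ hj)).le
  have hmem : m ∈ Set.Iic (n + 1) := Set.mem_Iic.2 (by omega)
  have hsucc : 0 < r (m + 1) := Nat.zero_lt_of_lt (hr m hm)
  have hpos : 0 < r m := hsucc.trans_le (hanti hmem (Set.mem_Iic.2 (by omega)) m.le_succ)
  calc r m - i * r (m + 1) < r m := Nat.sub_lt hpos (Nat.mul_pos hi hsucc)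
    _ ≤ r 0 := hanti (Set.mem_Iic.2 (Nat.zero_le _)) hmem m.zero_le

theorem stmt6_general (d b : ℕ) (hbd : b ≤ d) (n : ℕ) (dd cc ee : ℕ → ℕ)
    (hdd0 : dd 0 = d) (hdd1 : dd 1 = b)
    (hrec : ∀ j, 1 ≤ j → j ≤ n →
      dd (j - 1) = cc j * dd j + dd (j + 1) ∧ dd (j + 1) < dd j)
    (hee0 : ee 0 = 0) (hee1 : ee 1 = 1)
    (heerec : ∀ j, 1 ≤ j → j ≤ n → ee (j + 1) = cc j * ee j + ee (j - 1)) :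
    ∀ k, 1 ≤ k → k ≤ n → ∀ i, 1 ≤ i → i ≤ cc k →
      (Odd k →
        d ∣ dd (k - 1) - i * dd k + b * (i * ee k + ee (k - 1)) ∧
        (dd (k - 1) - i * dd k + b * (i * ee k + ee (k - 1))) / d ≤
          i * ee k + ee (k - 1)) ∧
      (Even k →
        d ∣ dd (k - 1) - i * dd k + (d - b) * (i * ee k + ee (k - 1)) ∧
        (dd (k - 1) - i * dd k + (d - b) * (i * ee k + ee (k - 1))) / d ≤
          i * ee k + ee (k - 1)) := by
  subst hdd0 hdd1
  intro k hk hkn i hi hic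
  obtain ⟨m, rfl⟩ := Nat.exists_eq_add_of_le' hk
  have hr (j : ℕ) (hj : j < n) := hrec (j + 1) (by omega) hj
  have he (j : ℕ) (hj : j < n) := heerec (j + 1) (by omega) hj
  simp only [Nat.add_sub_cancel] at hr he ⊢
  have hle : i * dd (m + 1) ≤ dd m :=
    (Nat.mul_le_mul_right _ hic).trans ((hr m hkn).1 ▸ Nat.le_add_right _ _)
  have hlt : dd m - i * dd (m + 1) < dd 0 :=
    sub_mul_lt_apply_zero hbd (fun j hj ↦ (hr j hj).2) hkn hi
  have hdvd := dvd_sub_mul_add_neg_one_pow_mul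
    (r := fun j ↦ (dd j : ℤ)) (c := fun j ↦ (cc (j + 1) : ℤ)) (e := fun j ↦ (ee j : ℤ))
    (fun j hj ↦ mod_cast (hr j hj).1) (mod_cast hee0) (mod_cast hee1)
    (fun j hj ↦ mod_cast he j hj) (Nat.le_of_succ_le hkn) (i : ℤ)
  refine ⟨fun hodd ↦ ⟨?_, add_mul_div_le hlt hbd _⟩,
    fun heven ↦ ⟨dvd_add_sub_mul_of_intCast_dvd_sub hbd ?_,
      add_mul_div_le hlt (Nat.sub_le _ _) _⟩⟩
  · have hm : Even m := by simpa [parity_simps] using hodd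
    rw [hm.neg_one_pow, one_mul] at hdvd
    zify [hle]
    exact hdvd
  · have hm : Odd m := by simpa [parity_simps] using heven
    rw [hm.neg_one_pow, neg_one_mul, ← sub_eq_add_neg] at hdvd
    push_cast [hle]
    exact hdvd

/-- With the Euclidean data for coprime `d > b > 0` (shifted
sequences `dd m = d_{m-1}`, `ee m = e_{m-1}`): for `1 ≤ k ≤ s+2` and `1 ≤ i ≤ c_k`,
if `k` is odd then `d` divides `O_{k,i} = d_{k-2} - i d_{k-1} + b (i e_{k-1} + e_{k-2})`
and `p_{k,i} = O_{k,i}/d` satisfies `0 ≤ p_{k,i} ≤ i e_{k-1} + e_{k-2}`; if `k` is even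
then `d` divides `E_{k,i} = d_{k-2} - i d_{k-1} + (d-b)(i e_{k-1} + e_{k-2})` and
`q_{k,i} = E_{k,i}/d` satisfies `0 ≤ q_{k,i} ≤ i e_{k-1} + e_{k-2}`. -/
theorem stmt6 (d b : ℕ) (hb : 0 < b) (hbd : b < d) (hgcd : Nat.gcd d b = 1)
    (s : ℕ) (dd cc ee : ℕ → ℕ)
    (hdd0 : dd 0 = d) (hdd1 : dd 1 = b)
    (hrec : ∀ j, 1 ≤ j → j ≤ s + 2 →
      dd (j - 1) = cc j * dd j + dd (j + 1) ∧ dd (j + 1) < dd j)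
    (hdds1 : dd (s + 2) = 1) (hdds2 : dd (s + 3) = 0)
    (hee0 : ee 0 = 0) (hee1 : ee 1 = 1)
    (heerec : ∀ j, 1 ≤ j → j ≤ s + 2 → ee (j + 1) = cc j * ee j + ee (j - 1)) :
    ∀ k, 1 ≤ k → k ≤ s + 2 → ∀ i, 1 ≤ i → i ≤ cc k →
      (Odd k →
        d ∣ dd (k - 1) - i * dd k + b * (i * ee k + ee (k - 1)) ∧
        (dd (k - 1) - i * dd k + b * (i * ee k + ee (k - 1))) / d ≤
          i * ee k + ee (k - 1)) ∧
      (Even k →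
        d ∣ dd (k - 1) - i * dd k + (d - b) * (i * ee k + ee (k - 1)) ∧
        (dd (k - 1) - i * dd k + (d - b) * (i * ee k + ee (k - 1))) / d ≤
          i * ee k + ee (k - 1)) := by
  exact stmt6_general d b hbd.le (s + 2) dd cc ee hdd0 hdd1 hrec hee0 hee1 heerec
end

section
/- Let d > b > 0 be coprime integers with the Euclidean data d_k, c_k, e_k. If α, β, γ are integers with α ≥ 1, β ≥ 1, γ ≥ 1 and α + bβ = dγ, then there exist k with 1 ≤ k ≤ s+2 and i with 1 ≤ i ≤ c_k such that α ≥ d_{k-2} − i d_{k-1} ≥ 1 and β ≥ i e_{k-1} + e_{k-2} ≥ 1. -/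
/-!
For even `j`, the vectors `(d j, e j)` and `(-d (j + 1), e (j + 1))` form a basis of the lattice of
all `(α, β)` with `α + d 1 * β` divisible by `d 0`. A point of this lattice with positive entries
has positive coordinates `m` and `n` in the basis of level `0`. If `d (j + 2) ≤ α` at the current
level `j`, the point dominates `(d j, e j) + i • (-d (j + 1), e (j + 1))` for a suitable
`1 ≤ i ≤ n`. Otherwise two divisions lead to the basis of level `j + 2`, where the coordinates are
still positive because `0 < α < d (j + 2)`. The remainders reach `0`, so this descent stops.
-/

/-- The Euclidean algorithm with `N` divisions: the remainders
`d 0 > d 1 > ⋯ > d N > d (N + 1) = 0`, the quotients `c 1, …, c N`, and the Fibonacci-like sequence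
`e` that they define. The indices of `d` and `e` are shifted: `d j` and `e j` stand for `d_{j-1}`
and `e_{j-1}`, whereas `c j` stands for `c_j`. -/
structure EuclideanData (N : ℕ) (d c e : ℕ → ℕ) : Prop where
  remainder_eq : ∀ j < N, d j = c (j + 1) * d (j + 1) + d (j + 2)
  remainder_lt : ∀ j ≤ N, d (j + 1) < d j
  remainder_last : d (N + 1) = 0
  continuant_zero : e 0 = 0
  continuant_one : e 1 = 1
  continuant_eq : ∀ j < N, e (j + 2) = c (j + 1) * e (j + 1) + e j

/-- The point `(α, β)` has positive coordinates `m` and `n` with respect to the vectors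
`(d j, e j)` and `(-d (j + 1), e (j + 1))`. The first equation is arranged so that no subtraction
occurs. -/
structure HasPosCoords (d e : ℕ → ℕ) (j α β m n : ℕ) : Prop where
  left_pos : 0 < m
  right_pos : 0 < n
  fst_eq : α + n * d (j + 1) = m * d j
  snd_eq : β = m * e j + n * e (j + 1)

theorem exists_add_mul_of_lt_remainder {α m n x y z c : ℕ} (hm : 0 < m) (hx : x = c * y + z)
    (hα : α < z) (h : α + n * y = m * x) :
    ∃ n', 0 < n' ∧ n = n' + m * c ∧ α + n' * y = m * z := by
  have hz : z ≤ m * z := Nat.le_mul_of_pos_left z hm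
  have hmx : m * x = m * c * y + m * z := by rw [hx]; ring
  have hlt : m * c < n := Nat.lt_of_mul_lt_mul_right (a := y) (by omega)
  obtain ⟨n', rfl⟩ := Nat.exists_eq_add_of_le' hlt.le
  exact ⟨n', by omega, rfl, by linarith⟩

theorem exists_add_mul_of_pos {α m n y z w c : ℕ} (hα : 0 < α) (hy : y = c * z + w)
    (h : α + n * y = m * z) :
    ∃ m', 0 < m' ∧ m = m' + n * c ∧ α + n * w = m' * z := by
  have hny : n * y = n * c * z + n * w := by rw [hy]; ring
  have hlt : n * c < m := Nat.lt_of_mul_lt_mul_right (a := z) (by omega)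
  obtain ⟨m', rfl⟩ := Nat.exists_eq_add_of_le' hlt.le
  exact ⟨m', by omega, rfl, by linarith⟩

namespace EuclideanData

variable {N j α β m n : ℕ} {d c e : ℕ → ℕ}

theorem quotient_pos (h : EuclideanData N d c e) (hj : j < N) : 0 < c (j + 1) := by
  have hlt : d (j + 2) < d j := (h.remainder_lt (j + 1) hj).trans (h.remainder_lt j hj.le)
  refine Nat.pos_of_ne_zero fun hc => hlt.ne' ?_
  rw [h.remainder_eq j hj, hc, zero_mul, zero_add]

theorem continuant_pos (h : EuclideanData N d c e) (hj : j ≤ N) : 0 < e (j + 1) := by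
  induction j with
  | zero => simp only [zero_add, h.continuant_one, zero_lt_one]
  | succ j ih =>
    rw [h.continuant_eq j hj]
    exact Nat.add_pos_left (Nat.mul_pos (h.quotient_pos hj) (ih (Nat.le_of_succ_le hj))) _

/-- If `d (j + 2) = 0`, the multiple `c (j + 1) * d (j + 1)` exhausts `d j`, so that one has to stop
at the quotient `c (j + 1) - 1`. -/
theorem exists_mul_lt_le_add (h : EuclideanData N d c e) (hj : j < N) (hle : d (j + 2) ≤ α)
    (hlast : d (j + 2) = 0 → d (j + 1) ≤ α) :
    ∃ q, 0 < q ∧ q ≤ c (j + 1) ∧ q * d (j + 1) < d j ∧ d j ≤ α + q * d (j + 1) := by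
  have hrem := h.remainder_eq j hj
  rcases Nat.eq_zero_or_pos (d (j + 2)) with hzero | hpos
  · obtain ⟨q, hq⟩ := Nat.exists_eq_add_one.mpr (h.quotient_pos hj)
    have hdj : d j = q * d (j + 1) + d (j + 1) := by rw [hrem, hzero, hq]; ring
    have hlt := h.remainder_lt j hj.le
    have hpos : 0 < d (j + 1) := (Nat.zero_le _).trans_lt (h.remainder_lt (j + 1) hj)
    have hqpos : 0 < q := Nat.pos_of_ne_zero fun hq₀ => by
      rw [hq₀, zero_mul, zero_add] at hdj
      exact hlt.ne' hdj
    have hα := hlast hzero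
    exact ⟨q, hqpos, by omega, by omega, by omega⟩
  · exact ⟨c (j + 1), h.quotient_pos hj, le_rfl, by omega, by omega⟩

theorem exists_le_of_remainder_le (h : EuclideanData N d c e) (hj : j < N) (hα : 0 < α)
    (hmn : HasPosCoords d e j α β m n) (hle : d (j + 2) ≤ α) :
    ∃ i, 0 < i ∧ i ≤ c (j + 1) ∧ i * d (j + 1) < d j ∧ d j ≤ α + i * d (j + 1) ∧
      i * e (j + 1) + e j ≤ β := by
  have hlast (hzero : d (j + 2) = 0) : d (j + 1) ≤ α := by
    have hrem : d j = c (j + 1) * d (j + 1) := by rw [h.remainder_eq j hj, hzero, add_zero]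
    have hdvd : d (j + 1) ∣ α + n * d (j + 1) :=
      hmn.fst_eq ▸ (Dvd.intro_left _ hrem.symm).mul_left m
    exact Nat.le_of_dvd hα ((Nat.dvd_add_left (Nat.dvd_mul_left _ _)).mp hdvd)
  obtain ⟨q, hq, hqc, hqlt, hqle⟩ := h.exists_mul_lt_le_add hj hle hlast
  have hnle : d j ≤ α + n * d (j + 1) :=
    hmn.fst_eq ▸ Nat.le_mul_of_pos_left (d j) hmn.left_pos
  have hβ {i : ℕ} (hi : i ≤ n) : i * e (j + 1) + e j ≤ β := by
    rw [hmn.snd_eq, add_comm]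
    exact add_le_add (Nat.le_mul_of_pos_left _ hmn.left_pos) (Nat.mul_le_mul_right _ hi)
  rcases le_total n q with hnq | hqn
  · exact ⟨n, hmn.right_pos, hnq.trans hqc, (Nat.mul_le_mul_right _ hnq).trans_lt hqlt, hnle,
      hβ le_rfl⟩
  · exact ⟨q, hq, hqc, hqlt, hqle, hβ hqn⟩

theorem exists_hasPosCoords_add_two (h : EuclideanData N d c e) (hj : j < N) (hα : 0 < α)
    (hmn : HasPosCoords d e j α β m n) (hlt : α < d (j + 2)) :
    j + 2 < N ∧ ∃ m' n', HasPosCoords d e (j + 2) α β m' n' := by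
  have ne_last {i : ℕ} (hi : 0 < d i) : i ≠ N + 1 := by
    rintro rfl
    exact hi.ne' h.remainder_last
  have hj₁ : j + 1 < N := by
    have := ne_last (hα.trans hlt)
    omega
  obtain ⟨n', hn', hn, hfst⟩ :=
    exists_add_mul_of_lt_remainder hmn.left_pos (h.remainder_eq j hj) hlt hmn.fst_eq
  obtain ⟨m', hm', hm, hfst'⟩ :=
    exists_add_mul_of_pos hα (h.remainder_eq (j + 1) hj₁) hfst
  have hpos : 0 < d (j + 3) := by
    have hlt' : α < α + n' * d (j + 3) := calc
      α < d (j + 2) := hlt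
      _ ≤ m' * d (j + 2) := Nat.le_mul_of_pos_left _ hm'
      _ = α + n' * d (j + 3) := hfst'.symm
    exact Nat.pos_of_mul_pos_left (Nat.pos_of_lt_add_right hlt')
  have hj₂ : j + 2 < N := by
    have := ne_last hpos
    omega
  refine ⟨hj₂, m', n', hm', hn', hfst', ?_⟩
  rw [hmn.snd_eq, h.continuant_eq (j + 1) hj₁, h.continuant_eq j hj, hn, hm]
  ring

theorem exists_le_of_hasPosCoords {j m n : ℕ} (h : EuclideanData N d c e) (hj : j < N)
    (hα : 0 < α) (hmn : HasPosCoords d e j α β m n) :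
    ∃ k < N, ∃ i, 0 < i ∧ i ≤ c (k + 1) ∧ i * d (k + 1) < d k ∧ d k ≤ α + i * d (k + 1) ∧
      i * e (k + 1) + e k ≤ β := by
  rcases le_or_gt (d (j + 2)) α with hle | hlt
  · exact ⟨j, hj, h.exists_le_of_remainder_le hj hα hmn hle⟩
  · obtain ⟨hj', m', n', hmn'⟩ := h.exists_hasPosCoords_add_two hj hα hmn hlt
    exact h.exists_le_of_hasPosCoords hj' hα hmn'
termination_by N - j

theorem hasPosCoords_zero (h : EuclideanData N d c e) {γ : ℕ} (hα : 0 < α) (hβ : 0 < β)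
    (heq : α + d 1 * β = d 0 * γ) : HasPosCoords d e 0 α β γ β where
  left_pos := Nat.pos_of_mul_pos_left (a := d 0) (by omega)
  right_pos := hβ
  fst_eq := by rw [zero_add, mul_comm β, heq, mul_comm]
  snd_eq := by rw [h.continuant_zero, h.continuant_one, mul_zero, zero_add, mul_one]

end EuclideanData

theorem stmt8_general (d b : ℕ) (hbd : b < d) (s : ℕ) (dd cc ee : ℕ → ℕ)
    (hdd0 : dd 0 = d) (hdd1 : dd 1 = b)
    (hrec : ∀ j, 1 ≤ j → j ≤ s + 2 →
      dd (j - 1) = cc j * dd j + dd (j + 1) ∧ dd (j + 1) < dd j)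
    (hdds2 : dd (s + 3) = 0) (hee0 : ee 0 = 0) (hee1 : ee 1 = 1)
    (heerec : ∀ j, 1 ≤ j → j ≤ s + 2 → ee (j + 1) = cc j * ee j + ee (j - 1)) :
    ∀ α β γ : ℕ, 1 ≤ α → 1 ≤ β → α + b * β = d * γ →
      ∃ k, 1 ≤ k ∧ k ≤ s + 2 ∧ ∃ i, 1 ≤ i ∧ i ≤ cc k ∧
        i * dd k < dd (k - 1) ∧ dd (k - 1) - i * dd k ≤ α ∧
        1 ≤ i * ee k + ee (k - 1) ∧ i * ee k + ee (k - 1) ≤ β := by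
  intro α β γ hα hβ heq
  subst hdd0 hdd1
  have h : EuclideanData (s + 2) dd cc ee :=
    { remainder_eq := fun j hj => (hrec (j + 1) (Nat.le_add_left 1 j) hj).1
      remainder_lt := fun
        | 0, _ => hbd
        | j + 1, hj => (hrec (j + 1) (Nat.le_add_left 1 j) hj).2
      remainder_last := hdds2
      continuant_zero := hee0
      continuant_one := hee1
      continuant_eq := fun j hj => heerec (j + 1) (Nat.le_add_left 1 j) hj }
  obtain ⟨k, hk, i, hi, hic, hlt, hle, hβi⟩ :=
    h.exists_le_of_hasPosCoords (Nat.succ_pos _) hα (h.hasPosCoords_zero hα hβ heq)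
  have hpos : 0 < i * ee (k + 1) := Nat.mul_pos hi (h.continuant_pos hk.le)
  exact ⟨k + 1, Nat.le_add_left 1 k, hk, i, hi, hic, hlt, Nat.sub_le_of_le_add hle,
    Nat.add_pos_left hpos _, hβi⟩

/-- With the Euclidean data for coprime `d > b > 0` (shifted
sequences `dd m = d_{m-1}`, `ee m = e_{m-1}`): if `α, β, γ ≥ 1` satisfy
`α + bβ = dγ`, then there exist `1 ≤ k ≤ s+2` and `1 ≤ i ≤ c_k` such that
`α ≥ d_{k-2} - i d_{k-1} ≥ 1` and `β ≥ i e_{k-1} + e_{k-2} ≥ 1`. -/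
theorem stmt8 (d b : ℕ) (hb : 0 < b) (hbd : b < d) (hgcd : Nat.gcd d b = 1)
    (s : ℕ) (dd cc ee : ℕ → ℕ)
    (hdd0 : dd 0 = d) (hdd1 : dd 1 = b)
    (hrec : ∀ j, 1 ≤ j → j ≤ s + 2 →
      dd (j - 1) = cc j * dd j + dd (j + 1) ∧ dd (j + 1) < dd j)
    (hdds1 : dd (s + 2) = 1) (hdds2 : dd (s + 3) = 0)
    (hee0 : ee 0 = 0) (hee1 : ee 1 = 1)
    (heerec : ∀ j, 1 ≤ j → j ≤ s + 2 → ee (j + 1) = cc j * ee j + ee (j - 1)) :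
    ∀ α β γ : ℕ, 1 ≤ α → 1 ≤ β → 1 ≤ γ → α + b * β = d * γ →
      ∃ k, 1 ≤ k ∧ k ≤ s + 2 ∧ ∃ i, 1 ≤ i ∧ i ≤ cc k ∧
        i * dd k < dd (k - 1) ∧ dd (k - 1) - i * dd k ≤ α ∧
        1 ≤ i * ee k + ee (k - 1) ∧ i * ee k + ee (k - 1) ≤ β :=
  fun α β γ hα hβ _ => stmt8_general d b hbd s dd cc ee hdd0 hdd1 hrec hdds2 hee0 hee1 heerec
    α β γ hα hβ
end

section
/- Let d ≥ 2 and 0 < b < d with gcd(d,b) = 1, and in R = k[x,y] set I = (x^d, y^d, x^b y^{d-b}) and J = (x^d, y^d). Then the reduction number of I with respect to J is d − 1; that is, I^d = J I^{d-1}, and I^{r+1} ≠ J I^r for every r with 1 ≤ r < d − 1. -/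
open MvPolynomial

/-!
Since `I = J + (m)` with `m = x^b y^(d-b)`, the power `I^(r+1)` is `J I^r + (m^(r+1))`, so
`I^(r+1) = J I^r` says that `m^(r+1) ∈ J I^r`. The ideal `J I^r` is generated by the products
`m^c g` with `g` a product of `n = r + 1 - c > 0` generators of `J`, all of them monomials;
cancelling `m^c`, the condition becomes `m^n ∈ J^n` for some `0 < n ≤ r + 1`. Comparing exponents,
`m^n ∈ J^n` exactly when `d ∣ n b`, and the least such `n` is `d / gcd(d, b)`.
-/

open scoped Pointwise

section CommMonoid

variable {M : Type*} [CommMonoid M] {S : Set M} {m x : M}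

theorem mem_insert_pow_iff {n : ℕ} :
    x ∈ insert m S ^ n ↔ ∃ c p, c + p = n ∧ ∃ g ∈ S ^ p, m ^ c * g = x := by
  constructor
  · intro hx
    induction n generalizing x with
    | zero => exact ⟨0, 0, rfl, 1, by simp, by simpa using hx.symm⟩
    | succ n ih =>
      rw [pow_succ'] at hx
      obtain ⟨a, ha, y, hy, rfl⟩ := hx
      obtain ⟨c, p, rfl, g, hg, rfl⟩ := ih hy
      rcases ha with rfl | ha
      · exact ⟨c + 1, p, by omega, g, hg, by simp only [pow_succ', mul_assoc]⟩
      · refine ⟨c, p + 1, by omega, a * g, ?_, mul_left_comm ..⟩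
        exact pow_succ' S p ▸ Set.mul_mem_mul ha hg
  · rintro ⟨c, p, rfl, g, hg, rfl⟩
    rw [pow_add]
    exact Set.mul_mem_mul (Set.pow_mem_pow (Set.mem_insert m S))
      (Set.pow_subset_pow_left (Set.subset_insert m S) hg)

theorem mem_pair_pow_iff {u v : M} {n : ℕ} :
    x ∈ ({u, v} : Set M) ^ n ↔ ∃ p q, p + q = n ∧ u ^ p * v ^ q = x := by
  simp only [mem_insert_pow_iff, Set.singleton_pow, Set.mem_singleton_iff, exists_eq_left]

theorem mem_mul_insert_pow_iff {r : ℕ} :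
    x ∈ S * insert m S ^ r ↔ ∃ c n, 0 < n ∧ c + n = r + 1 ∧ ∃ g ∈ S ^ n, m ^ c * g = x := by
  constructor
  · rintro ⟨a, ha, y, hy, rfl⟩
    obtain ⟨c, p, rfl, g, hg, rfl⟩ := mem_insert_pow_iff.mp hy
    refine ⟨c, p + 1, p.succ_pos, rfl, a * g, ?_, mul_left_comm ..⟩
    exact pow_succ' S p ▸ Set.mul_mem_mul ha hg
  · rintro ⟨c, n, hn, hcn, g, hg, rfl⟩
    obtain ⟨p, rfl⟩ := Nat.exists_eq_add_one.mpr hn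
    rw [pow_succ'] at hg
    obtain ⟨a, ha, g, hg, rfl⟩ := hg
    exact ⟨a, ha, m ^ c * g, mem_insert_pow_iff.mpr ⟨c, p, by omega, g, hg, rfl⟩,
      mul_left_comm ..⟩

theorem insert_pow_succ (m : M) (S : Set M) (r : ℕ) :
    insert m S ^ (r + 1) = insert (m ^ (r + 1)) (S * insert m S ^ r) := by
  refine subset_antisymm (fun x hx ↦ ?_) (Set.insert_subset ?_ ?_)
  · obtain ⟨c, p, hcp, g, hg, rfl⟩ := mem_insert_pow_iff.mp hx
    obtain rfl | hp := p.eq_zero_or_pos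
    · obtain rfl : g = 1 := by simpa only [pow_zero, Set.mem_one] using hg
      exact .inl (by rw [← hcp, add_zero, mul_one])
    · exact .inr (mem_mul_insert_pow_iff.mpr ⟨c, p, hp, hcp, g, hg, rfl⟩)
  · exact Set.pow_mem_pow (Set.mem_insert m S)
  · rw [pow_succ']
    exact Set.mul_subset_mul_right (Set.subset_insert m S)

end CommMonoid

section Ideal

variable {R : Type*} [CommSemiring R]

theorem ideal_span_pow (S : Set R) (n : ℕ) : Ideal.span S ^ n = Ideal.span (S ^ n) :=
  Submodule.span_pow S n

theorem span_insert_pow_succ_eq_iff_pow_mem {S : Set R} {m : R} {r : ℕ} :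
    Ideal.span (insert m S) ^ (r + 1) = Ideal.span S * Ideal.span (insert m S) ^ r ↔
      m ^ (r + 1) ∈ Ideal.span S * Ideal.span (insert m S) ^ r := by
  simp only [ideal_span_pow, Ideal.span_mul_span', insert_pow_succ]
  rw [Ideal.span_insert, sup_eq_right, Ideal.span_singleton_le_iff_mem]

end Ideal

section Monomial

variable {σ k : Type*} [CommSemiring k]

variable (σ k) in
/-- The multiplicative monoid of monomials with coefficient `1`; saying that a set of generators
is contained in it makes the ideal they span a monomial ideal. -/
noncomputable def monomialSubmonoid : Submonoid (MvPolynomial σ k) where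
  carrier := Set.range fun s ↦ monomial s 1
  one_mem' := ⟨0, rfl⟩
  mul_mem' := by
    rintro _ _ ⟨s, rfl⟩ ⟨t, rfl⟩
    exact ⟨s + t, by simp only [monomial_mul, one_mul]⟩

theorem X_pow_mem_monomialSubmonoid (i : σ) (n : ℕ) :
    (X i ^ n : MvPolynomial σ k) ∈ monomialSubmonoid σ k :=
  ⟨Finsupp.single i n, X_pow_eq_monomial.symm⟩

theorem isRegular_of_mem_monomialSubmonoid {f : MvPolynomial σ k}
    (hf : f ∈ monomialSubmonoid σ k) : IsRegular f := by
  obtain ⟨s, rfl⟩ := hf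
  exact isRegular_one.monomial

theorem mem_span_iff_exists_dvd [Nontrivial k] {S : Set (MvPolynomial σ k)}
    (hS : S ⊆ monomialSubmonoid σ k) {f : MvPolynomial σ k} (hf : f ∈ monomialSubmonoid σ k) :
    f ∈ Ideal.span S ↔ ∃ g ∈ S, g ∣ f := by
  obtain ⟨A, rfl⟩ := Set.subset_range_iff_exists_image_eq.mp hS
  obtain ⟨s, rfl⟩ := hf
  refine ⟨fun h ↦ ?_, fun ⟨g, hg, hdvd⟩ ↦ Ideal.mem_of_dvd _ hdvd (Ideal.subset_span hg)⟩
  obtain ⟨t, ht, hts⟩ := mem_ideal_span_monomial_image.mp h s (by classical simp [coeff_monomial])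
  exact ⟨_, ⟨t, ht, rfl⟩, monomial_one_dvd_monomial_one.mpr hts⟩

theorem span_insert_pow_succ_eq_iff_exists_pow_mem [Nontrivial k] {S : Set (MvPolynomial σ k)}
    (hS : S ⊆ monomialSubmonoid σ k) {m : MvPolynomial σ k} (hm : m ∈ monomialSubmonoid σ k)
    {r : ℕ} :
    Ideal.span (insert m S) ^ (r + 1) = Ideal.span S * Ideal.span (insert m S) ^ r ↔
      ∃ n, 0 < n ∧ n ≤ r + 1 ∧ m ^ n ∈ Ideal.span S ^ n := by
  have hpow (n : ℕ) : S ^ n ⊆ monomialSubmonoid σ k := Submonoid.pow_subset hS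
  have hmul : S * insert m S ^ r ⊆ monomialSubmonoid σ k :=
    Submonoid.mul_subset hS (Submonoid.pow_subset (Set.insert_subset hm hS))
  have cancel {c n : ℕ} {g : MvPolynomial σ k} : m ^ c * g ∣ m ^ (c + n) ↔ g ∣ m ^ n := by
    rw [pow_add]
    exact (isRegular_of_mem_monomialSubmonoid (pow_mem hm c)).left.dvd_cancel_left
  rw [span_insert_pow_succ_eq_iff_pow_mem]
  simp only [ideal_span_pow, Ideal.span_mul_span', mem_span_iff_exists_dvd hmul (pow_mem hm _),
    mem_span_iff_exists_dvd (hpow _) (pow_mem hm _), mem_mul_insert_pow_iff]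
  constructor
  · rintro ⟨_, ⟨c, n, hn, hcn, g, hg, rfl⟩, hdvd⟩
    exact ⟨n, hn, by omega, g, hg, cancel.mp (hcn ▸ hdvd)⟩
  · rintro ⟨n, hn, hnr, g, hg, hdvd⟩
    obtain ⟨c, hc⟩ := Nat.exists_eq_add_of_le' hnr
    exact ⟨m ^ c * g, ⟨c, n, hn, hc.symm, g, hg, rfl⟩, hc ▸ cancel.mpr hdvd⟩

theorem X_pow_mul_X_pow_dvd_iff [Nontrivial k] {i j : σ} (hij : i ≠ j) {a b c d : ℕ} :
    (X i ^ a * X j ^ b : MvPolynomial σ k) ∣ X i ^ c * X j ^ d ↔ a ≤ c ∧ b ≤ d := by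
  refine ⟨fun h ↦ ?_, fun h ↦ mul_dvd_mul (pow_dvd_pow _ h.1) (pow_dvd_pow _ h.2)⟩
  simp only [X_pow_eq_monomial, monomial_mul, one_mul, monomial_one_dvd_monomial_one] at h
  exact ⟨by simpa [hij, hij.symm] using h i, by simpa [hij, hij.symm] using h j⟩

theorem X_pow_mul_X_pow_pow_mem_span_iff [Nontrivial k] {i j : σ} (hij : i ≠ j) {b c n : ℕ}
    (hbc : 0 < b + c) :
    (X i ^ b * X j ^ c : MvPolynomial σ k) ^ n ∈
        (Ideal.span {X i ^ (b + c), X j ^ (b + c)} : Ideal (MvPolynomial σ k)) ^ n ↔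
      b + c ∣ n * b := by
  have hX := X_pow_mem_monomialSubmonoid (σ := σ) (k := k)
  have hS : {X i ^ (b + c), X j ^ (b + c)} ⊆ (monomialSubmonoid σ k : Set (MvPolynomial σ k)) :=
    Set.pair_subset (hX i _) (hX j _)
  rw [ideal_span_pow, mem_span_iff_exists_dvd (Submonoid.pow_subset hS)
    (pow_mem (mul_mem (hX i b) (hX j c)) n)]
  simp only [mem_pair_pow_iff, mul_pow, ← pow_mul]
  constructor
  · rintro ⟨_, ⟨p, q, rfl, rfl⟩, hdvd⟩
    obtain ⟨hp, hq⟩ := (X_pow_mul_X_pow_dvd_iff hij).mp hdvd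
    -- The two inequalities add up to an equality, so each of them is an equality.
    exact ⟨p, by linarith⟩
  · rintro ⟨p, hp⟩
    have hpn : p ≤ n := Nat.le_of_mul_le_mul_left (by linarith [Nat.zero_le (n * c)]) hbc
    obtain ⟨q, rfl⟩ := Nat.exists_eq_add_of_le hpn
    exact ⟨_, ⟨p, q, rfl, rfl⟩, (X_pow_mul_X_pow_dvd_iff hij).mpr ⟨by linarith, by linarith⟩⟩

end Monomial

theorem exists_pos_le_dvd_mul_iff {d b N : ℕ} (hd : 0 < d) :
    (∃ n, 0 < n ∧ n ≤ N ∧ d ∣ n * b) ↔ d / d.gcd b ≤ N := by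
  have hg : 0 < d.gcd b := Nat.gcd_pos_of_pos_left b hd
  have hdvd (n : ℕ) : d ∣ n * b ↔ d / d.gcd b ∣ n := by
    rw [Nat.div_dvd_iff_dvd_mul (Nat.gcd_dvd_left d b) hg, Nat.dvd_gcd_mul_iff_dvd_mul, mul_comm]
  have hpos : 0 < d / d.gcd b := Nat.div_pos (Nat.gcd_le_left b hd) hg
  simp only [hdvd]
  exact ⟨fun ⟨n, hn, hnN, h⟩ ↦ (Nat.le_of_dvd hn h).trans hnN, fun h ↦ ⟨_, hpos, h, dvd_rfl⟩⟩

theorem stmt10_general {σ k : Type*} [CommSemiring k] [Nontrivial k] {i j : σ} (hij : i ≠ j)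
    {d b : ℕ} (hd : 0 < d) (hbd : b ≤ d) (r : ℕ) :
    let x : MvPolynomial σ k := X i
    let y : MvPolynomial σ k := X j
    let I := Ideal.span {x ^ d, y ^ d, x ^ b * y ^ (d - b)}
    let J := Ideal.span {x ^ d, y ^ d}
    I ^ (r + 1) = J * I ^ r ↔ d / d.gcd b ≤ r + 1 := by
  intro x y I J
  obtain ⟨c, rfl⟩ := Nat.exists_eq_add_of_le hbd
  have hX := X_pow_mem_monomialSubmonoid (σ := σ) (k := k)
  have hI : I = Ideal.span (insert (x ^ b * y ^ c) {x ^ (b + c), y ^ (b + c)}) := by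
    simp only [I, Nat.add_sub_cancel_left]
    congr 1
    grind
  rw [hI, span_insert_pow_succ_eq_iff_exists_pow_mem (Set.pair_subset (hX i _) (hX j _))
    (mul_mem (hX i b) (hX j c)), ← exists_pos_le_dvd_mul_iff hd]
  simp only [X_pow_mul_X_pow_pow_mem_span_iff hij hd]

/-- For `d ≥ 2`, `0 < b < d` with `gcd(d,b) = 1`, the reduction
number of `I = (x^d, y^d, x^b y^{d-b})` with respect to `J = (x^d, y^d)` is `d-1`:
`I^d = J I^{d-1}` and `I^{r+1} ≠ J I^r` for all `1 ≤ r < d-1`. -/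
theorem stmt10 {k : Type*} [Field k] (d b : ℕ) (hd : 2 ≤ d) (hb : 0 < b) (hbd : b < d)
    (hgcd : Nat.gcd d b = 1) :
    let R := MvPolynomial (Fin 2) k
    let x : R := X 0
    let y : R := X 1
    let I : Ideal R := Ideal.span {x ^ d, y ^ d, x ^ b * y ^ (d - b)}
    let J : Ideal R := Ideal.span {x ^ d, y ^ d}
    I ^ d = J * I ^ (d - 1) ∧
      ∀ r : ℕ, 1 ≤ r → r < d - 1 → I ^ (r + 1) ≠ J * I ^ r := by
  intro R x y I J
  have key (r : ℕ) : I ^ (r + 1) = J * I ^ r ↔ d ≤ r + 1 := by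
    simpa only [hgcd, Nat.div_one] using stmt10_general zero_ne_one (hb.trans hbd) hbd.le r
  refine ⟨?_, fun r _ hr h ↦ by have := (key r).mp h; omega⟩
  simpa only [Nat.sub_add_cancel (hb.trans hbd)] using (key (d - 1)).mpr (by omega)
end

section
/- Let I = (x_1^a,…,x_n^a, (x_1⋯x_n)^b) in R = k[x_1,…,x_n] with n ≥ 2 and 0 < b < a, and suppose nb < a. Set Q = (x_1^a − x_n^a, …, x_{n-1}^a − x_n^a, (x_1⋯x_n)^b). Then Q ⊆ I, I^n = Q I^{n-1}, and x_n^{(n-1)a} ∉ Q I^{n-2}; consequently Q is a reduction of I with reduction number red_Q(I) = n − 1. -/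
open MvPolynomial

/-!
Put `y = xᵢ₀ᵃ`. Since `I = Q + (y)`, every power satisfies `Iᵐ⁺¹ ⊆ Q Iᵐ + (yᵐ⁺¹)`, so only
`yⁿ ∈ Q Iⁿ⁻¹` is needed for `Iⁿ = Q Iⁿ⁻¹`. Modulo `Q Iⁿ⁻¹` the power `yⁿ` agrees with
`∏ᵢ xᵢᵃ = (∏ᵢ xᵢ)ᵃ`, which is divisible by the `n`-th power of `(∏ᵢ xᵢ)ᵇ ∈ Q` because `nb ≤ a`.

Conversely, the linear functional that adds up the coefficients at the monomials
`∏ᵢ xᵢ^(a dᵢ)` with `∑ᵢ dᵢ = n - 1` vanishes on `Q`: it does not see which `xᵢᵃ` a monomial is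
multiplied by, and a multiple of `(∏ᵢ xᵢ)ᵇ` with all exponents divisible by `a` has degree at
least `na`. As the functional sends `yⁿ⁻¹` to `1`, we get `yⁿ⁻¹ ∉ Q`, which excludes every
exponent smaller than `n - 1`.
-/

section CommSemiring

variable {B : Type*} [CommSemiring B]

/-- The reduction number of `I` with respect to `Q`: the least `r` with `I ^ (r + 1) = Q * I ^ r`.
It has the junk value `0` if no such `r` exists. -/
noncomputable def reductionNumber (Q I : Ideal B) : ℕ :=
  sInf {r : ℕ | I ^ (r + 1) = Q * I ^ r}

lemma reductionNumber_eq {Q I : Ideal B} {y : B} {r : ℕ} (hr : I ^ (r + 1) = Q * I ^ r)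
    (hyI : y ∈ I) (hyQ : y ^ r ∉ Q) : reductionNumber Q I = r := by
  refine IsLeast.csInf_eq ⟨hr, fun s (hs : I ^ (s + 1) = Q * I ^ s) ↦ ?_⟩
  by_contra! hsr
  have hy : y ^ (s + 1) ∈ Q := Ideal.mul_le_left (hs ▸ Ideal.pow_mem_pow hyI (s + 1))
  exact hyQ (Q.pow_mem_of_pow_mem hy hsr)

lemma sup_span_singleton_pow_succ_le (Q : Ideal B) (y : B) (m : ℕ) :
    (Q ⊔ Ideal.span {y}) ^ (m + 1) ≤
      Q * (Q ⊔ Ideal.span {y}) ^ m ⊔ Ideal.span {y ^ (m + 1)} := by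
  induction m with
  | zero => simp
  | succ m ih =>
    set I := Q ⊔ Ideal.span {y} with hI
    have hyI : Ideal.span {y} ≤ I := le_sup_right
    calc I ^ (m + 1 + 1) = Q * I ^ (m + 1) ⊔ Ideal.span {y} * I ^ (m + 1) := by
          rw [pow_succ' I (m + 1), ← Ideal.sup_mul, ← hI]
      _ ≤ Q * I ^ (m + 1) ⊔ Ideal.span {y} * (Q * I ^ m ⊔ Ideal.span {y ^ (m + 1)}) := by gcongr
      _ = Q * I ^ (m + 1) ⊔ (Q * (Ideal.span {y} * I ^ m) ⊔ Ideal.span {y ^ (m + 1 + 1)}) := by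
          rw [Ideal.mul_sup, mul_left_comm, Ideal.span_singleton_mul_span_singleton, ← pow_succ']
      _ ≤ Q * I ^ (m + 1) ⊔ (Q * (I * I ^ m) ⊔ Ideal.span {y ^ (m + 1 + 1)}) := by gcongr
      _ = Q * I ^ (m + 1) ⊔ Ideal.span {y ^ (m + 1 + 1)} := by
          rw [← pow_succ', ← sup_assoc, sup_idem]

end CommSemiring

section CommRing

variable {B ι : Type*} [CommRing B]

lemma prod_sub_pow_card_mem {Q I : Ideal B} (hQI : Q ≤ I) {y : B} (hy : y ∈ I) {f : ι → B}
    {s : Finset ι} (hs : s.Nonempty) (hf : ∀ i ∈ s, f i - y ∈ Q) :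
    ∏ i ∈ s, f i - y ^ s.card ∈ Q * I ^ (s.card - 1) := by
  induction hs using Finset.Nonempty.cons_induction with
  | singleton j => simpa using hf j
  | cons j s hj hs ih =>
    obtain ⟨hfj, hfs⟩ := Finset.forall_mem_cons hj _ |>.1 hf
    have hfI (i) (hi : i ∈ s) : f i ∈ I := (Submodule.sub_mem_iff_left I hy).1 (hQI (hfs i hi))
    have hprod : ∏ i ∈ s, f i ∈ I ^ s.card := by
      simpa using Ideal.prod_mem_prod (I := fun _ ↦ I) hfI
    have hpow : I * (Q * I ^ (s.card - 1)) = Q * I ^ s.card := by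
      rw [mul_left_comm, mul_pow_sub_one hs.card_ne_zero]
    have hsplit : f j * ∏ i ∈ s, f i - y ^ (s.card + 1) =
        (f j - y) * ∏ i ∈ s, f i + y * (∏ i ∈ s, f i - y ^ s.card) := by ring
    rw [Finset.prod_cons, Finset.card_cons, Nat.add_sub_cancel, hsplit]
    exact add_mem (Ideal.mul_mem_mul hfj hprod) (hpow ▸ Ideal.mul_mem_mul hy (ih hfs))

lemma sup_span_singleton_pow_card_eq {Q : Ideal B} {y : B} {f : ι → B} {s : Finset ι}
    (hs : s.Nonempty) (hf : ∀ i ∈ s, f i - y ∈ Q)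
    (hprod : ∏ i ∈ s, f i ∈ Q * (Q ⊔ Ideal.span {y}) ^ (s.card - 1)) :
    (Q ⊔ Ideal.span {y}) ^ s.card = Q * (Q ⊔ Ideal.span {y}) ^ (s.card - 1) := by
  set I := Q ⊔ Ideal.span {y}
  have hQI : Q ≤ I := le_sup_left
  have hyI : y ∈ I := Ideal.mem_sup_right (Ideal.mem_span_singleton_self y)
  have hy : y ^ s.card ∈ Q * I ^ (s.card - 1) :=
    (Submodule.sub_mem_iff_right _ hprod).1 (prod_sub_pow_card_mem hQI hyI hs hf)
  have hcard : s.card - 1 + 1 = s.card := Nat.sub_add_cancel hs.card_pos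
  apply le_antisymm
  · calc I ^ s.card ≤ Q * I ^ (s.card - 1) ⊔ Ideal.span {y ^ s.card} := by
          simpa only [hcard] using sup_span_singleton_pow_succ_le Q y (s.card - 1)
      _ ≤ Q * I ^ (s.card - 1) := sup_le le_rfl ((Ideal.span_singleton_le_iff_mem _).2 hy)
  · calc Q * I ^ (s.card - 1) ≤ I * I ^ (s.card - 1) := Ideal.mul_mono_left hQI
      _ = I ^ s.card := mul_pow_sub_one hs.card_ne_zero I

end CommRing

section DifferenceIdeal

variable {B σ : Type*} [CommRing B]

/-- The ideal generated by `w` and the differences `f i - f i₀` with `i ≠ i₀`. For `f i = xᵢᵃ` and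
`w = (∏ᵢ xᵢ)ᵇ` it is the proposed reduction of the ideal generated by `w` and all `f i`. -/
def differenceIdeal (f : σ → B) (w : B) (i₀ : σ) : Ideal B :=
  Ideal.span ({p | ∃ i, i ≠ i₀ ∧ p = f i - f i₀} ∪ {w})

lemma mem_differenceIdeal (f : σ → B) (w : B) (i₀ : σ) : w ∈ differenceIdeal f w i₀ :=
  Ideal.subset_span (Or.inr rfl)

lemma sub_mem_differenceIdeal (f : σ → B) (w : B) (i₀ i : σ) :
    f i - f i₀ ∈ differenceIdeal f w i₀ := by
  obtain rfl | hi := eq_or_ne i i₀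
  · simp
  · exact Ideal.subset_span (Or.inl ⟨i, hi, rfl⟩)

lemma differenceIdeal_sup_span_singleton (f : σ → B) (w : B) (i₀ : σ) :
    differenceIdeal f w i₀ ⊔ Ideal.span {f i₀} = Ideal.span (Set.range f ∪ {w}) := by
  have hf (i) : f i ∈ Ideal.span (Set.range f ∪ {w}) := Ideal.subset_span (Or.inl ⟨i, rfl⟩)
  apply le_antisymm
  · refine sup_le (Ideal.span_le.2 ?_) ((Ideal.span_singleton_le_iff_mem _).2 (hf i₀))
    rintro _ (⟨i, -, rfl⟩ | rfl)
    · exact sub_mem (hf i) (hf i₀)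
    · exact Ideal.subset_span (Or.inr rfl)
  · refine Ideal.span_le.2 ?_
    rintro _ (⟨i, rfl⟩ | rfl)
    · rw [SetLike.mem_coe, ← sub_add_cancel (f i) (f i₀)]
      exact Submodule.add_mem_sup (sub_mem_differenceIdeal f w i₀ i)
        (Ideal.mem_span_singleton_self _)
    · exact Ideal.mem_sup_left (mem_differenceIdeal f _ i₀)

lemma differenceIdeal_le (f : σ → B) (w : B) (i₀ : σ) :
    differenceIdeal f w i₀ ≤ Ideal.span (Set.range f ∪ {w}) :=
  le_sup_left.trans_eq (differenceIdeal_sup_span_singleton f w i₀)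

lemma span_pow_card_eq_differenceIdeal_mul [Fintype σ] (x : σ → B) (i₀ : σ) {a b : ℕ}
    (hab : Fintype.card σ * b ≤ a) :
    Ideal.span (Set.range (fun i ↦ x i ^ a) ∪ {(∏ i, x i) ^ b}) ^ Fintype.card σ =
      differenceIdeal (fun i ↦ x i ^ a) ((∏ i, x i) ^ b) i₀ *
        Ideal.span (Set.range (fun i ↦ x i ^ a) ∪ {(∏ i, x i) ^ b}) ^ (Fintype.card σ - 1) := by
  set w := (∏ i, x i) ^ b with hw
  set Q := differenceIdeal (fun i ↦ x i ^ a) w i₀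
  have hwQ : w ∈ Q := mem_differenceIdeal _ w i₀
  rw [← differenceIdeal_sup_span_singleton _ w i₀]
  have hcard : Fintype.card σ ≠ 0 := (Fintype.card_pos_iff.2 ⟨i₀⟩).ne'
  refine sup_span_singleton_pow_card_eq ⟨i₀, Finset.mem_univ i₀⟩
    (fun i _ ↦ sub_mem_differenceIdeal _ w i₀ i) ?_
  rw [Finset.prod_pow]
  refine Ideal.pow_mem_of_pow_mem _ ?_ hab
  rw [mul_comm (Fintype.card σ), pow_mul, ← hw, ← mul_pow_sub_one hcard]
  exact Ideal.mul_mem_mul hwQ (Ideal.pow_mem_pow (Ideal.mem_sup_left hwQ) _)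

end DifferenceIdeal

open scoped Pointwise in
lemma map_eq_zero_of_mem_span {A S M : Type*} [CommSemiring A] [Semiring S] [Algebra A S]
    [AddCommMonoid M] [Module A M] {T : Set S} (hT : Submodule.span A T = ⊤) (φ : S →ₗ[A] M)
    {G : Set S} (hG : ∀ g ∈ G, ∀ t ∈ T, φ (t * g) = 0) {p : S} (hp : p ∈ Ideal.span G) :
    φ p = 0 := by
  have hle : Submodule.span A (T • G) ≤ LinearMap.ker φ := by
    rw [Submodule.span_le]
    rintro _ ⟨t, ht, g, hg, rfl⟩
    exact hG g hg t ht
  rw [Submodule.span_smul_of_span_eq_top hT] at hle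
  exact hle hp

section DivisibleCoeffSum

variable {σ A : Type*} [CommSemiring A]

open Classical in
/-- The linear functional on polynomials that adds up the coefficients at the monomials
`∏ᵢ xᵢ^(a dᵢ)` with `∑ᵢ dᵢ = m`. It separates `xᵢ^(m a)` from the ideal generated by
the differences `xᵢᵃ - xⱼᵃ` and a power of the product of all variables. -/
noncomputable def divisibleCoeffSum (a m : ℕ) : MvPolynomial σ A →ₗ[A] A :=
  (basisMonomials σ A).constr A
    fun s ↦ if (∀ j, a ∣ s j) ∧ s.degree = m * a then 1 else 0

open Classical in
lemma divisibleCoeffSum_monomial (a m : ℕ) (s : σ →₀ ℕ) :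
    divisibleCoeffSum a m (monomial s (1 : A)) =
      if (∀ j, a ∣ s j) ∧ s.degree = m * a then 1 else 0 := by
  rw [divisibleCoeffSum, ← congrFun (coe_basisMonomials σ A) s, Module.Basis.constr_basis]

lemma divisibleCoeffSum_monomial_mul_X_pow (a m : ℕ) (s : σ →₀ ℕ) (i j : σ) :
    divisibleCoeffSum a m (monomial s (1 : A) * X i ^ a) =
      divisibleCoeffSum a m (monomial s 1 * X j ^ a) := by
  classical
  have hdvd (i l : σ) : a ∣ (s + Finsupp.single i a) l ↔ a ∣ s l := by
    rw [Finsupp.add_apply, Finsupp.single_apply]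
    split_ifs <;> simp
  simp only [X_pow_eq_monomial, monomial_mul, mul_one, divisibleCoeffSum_monomial, hdvd, map_add,
    Finsupp.degree_single]

lemma divisibleCoeffSum_X_pow (a m : ℕ) (i : σ) :
    divisibleCoeffSum a m (X i ^ (m * a) : MvPolynomial σ A) = 1 := by
  classical
  have hdvd (j : σ) : a ∣ Finsupp.single i (m * a) j := by
    rw [Finsupp.single_apply]
    split_ifs <;> simp
  rw [X_pow_eq_monomial, divisibleCoeffSum_monomial, if_pos ⟨hdvd, Finsupp.degree_single _ _⟩]

variable [Fintype σ]

lemma prod_X_pow_eq_monomial_const (b : ℕ) :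
    (∏ i, X i : MvPolynomial σ A) ^ b = monomial (Finsupp.equivFunOnFinite.symm fun _ ↦ b) 1 := by
  rw [monomial_eq, C_1, one_mul, Finsupp.prod_fintype _ _ fun _ ↦ pow_zero _, ← Finset.prod_pow]
  rfl

lemma card_mul_le_degree_of_dvd {a : ℕ} {s : σ →₀ ℕ} (hpos : ∀ i, 0 < s i) (hdvd : ∀ i, a ∣ s i) :
    Fintype.card σ * a ≤ s.degree := by
  rw [Finsupp.degree_eq_sum, ← smul_eq_mul]
  exact Finset.card_nsmul_le_sum _ _ _ fun i _ ↦ Nat.le_of_dvd (hpos i) (hdvd i)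

lemma divisibleCoeffSum_monomial_mul_prod_X_pow (a : ℕ) {b m : ℕ} (hb : 0 < b)
    (hm : m < Fintype.card σ) (s : σ →₀ ℕ) :
    divisibleCoeffSum a m (monomial s (1 : A) * (∏ i, X i) ^ b) = 0 := by
  classical
  rw [prod_X_pow_eq_monomial_const, monomial_mul, mul_one, divisibleCoeffSum_monomial, if_neg]
  rintro ⟨hdvd, hdeg⟩
  have hpos (i : σ) : 0 < (s + Finsupp.equivFunOnFinite.symm fun _ ↦ b : σ →₀ ℕ) i :=
    Nat.add_pos_right (s i) hb
  obtain ⟨i⟩ : Nonempty σ := Fintype.card_pos_iff.1 hm.pos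
  have ha : 0 < a := Nat.pos_of_dvd_of_pos (hdvd i) (hpos i)
  have hle := card_mul_le_degree_of_dvd hpos hdvd
  exact hm.not_ge (Nat.le_of_mul_le_mul_right (hle.trans_eq hdeg) ha)

end DivisibleCoeffSum

theorem X_pow_notMem_differenceIdeal {σ A : Type*} [Fintype σ] [CommRing A] [Nontrivial A]
    (i₀ : σ) (a : ℕ) {b m : ℕ} (hb : 0 < b) (hm : m < Fintype.card σ) :
    X i₀ ^ (m * a) ∉
      differenceIdeal (fun i ↦ (X i ^ a : MvPolynomial σ A)) ((∏ i, X i) ^ b) i₀ := by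
  intro hmem
  refine one_ne_zero ((divisibleCoeffSum_X_pow (A := A) a m i₀).symm.trans ?_)
  refine map_eq_zero_of_mem_span (basisMonomials σ A).span_eq _ ?_ hmem
  rintro _ (⟨i, -, rfl⟩ | rfl) _ ⟨s, rfl⟩ <;> rw [coe_basisMonomials]
  · rw [mul_sub, map_sub, sub_eq_zero]
    exact divisibleCoeffSum_monomial_mul_X_pow a m s i i₀
  · exact divisibleCoeffSum_monomial_mul_prod_X_pow a hb hm s

theorem stmt15_general {σ A : Type*} [Fintype σ] [CommRing A] [Nontrivial A] (i₀ : σ) {a b : ℕ}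
    (hb : 0 < b) (hab : Fintype.card σ * b ≤ a) :
    let I : Ideal (MvPolynomial σ A) :=
      Ideal.span (Set.range (fun i ↦ X i ^ a) ∪ {(∏ i, X i) ^ b})
    let Q : Ideal (MvPolynomial σ A) := differenceIdeal (fun i ↦ X i ^ a) ((∏ i, X i) ^ b) i₀
    Q ≤ I ∧ I ^ Fintype.card σ = Q * I ^ (Fintype.card σ - 1) ∧
      X i₀ ^ ((Fintype.card σ - 1) * a) ∉ Q ∧ reductionNumber Q I = Fintype.card σ - 1 := by
  intro I Q
  have hcard : 0 < Fintype.card σ := Fintype.card_pos_iff.2 ⟨i₀⟩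
  have hpow : I ^ Fintype.card σ = Q * I ^ (Fintype.card σ - 1) :=
    span_pow_card_eq_differenceIdeal_mul X i₀ hab
  have hX : X i₀ ^ ((Fintype.card σ - 1) * a) ∉ Q :=
    X_pow_notMem_differenceIdeal i₀ a hb (Nat.sub_lt hcard one_pos)
  have hXI : X i₀ ^ a ∈ I := Ideal.subset_span (Or.inl ⟨i₀, rfl⟩)
  refine ⟨differenceIdeal_le _ _ i₀, hpow, hX, reductionNumber_eq ?_ hXI ?_⟩
  · rwa [Nat.sub_add_cancel hcard]
  · rwa [← pow_mul, mul_comm]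

/-- Let `I = (x_1^a,…,x_n^a, (x_1⋯x_n)^b)` with `n ≥ 2`,
`0 < b < a` and `nb < a`.  Set `Q = (x_1^a - x_n^a, …, x_{n-1}^a - x_n^a, (x_1⋯x_n)^b)`.
Then `Q ⊆ I`, `I^n = Q I^{n-1}`, `x_n^{(n-1)a} ∉ Q I^{n-2}`; consequently `Q` is a
reduction of `I` with `red_Q(I) = n - 1`. -/
theorem stmt15 {k : Type*} [Field k] (n a b : ℕ) (hn : 2 ≤ n) (hb : 0 < b)
    (hba : b < a) (hnb : n * b < a) :
    let R := MvPolynomial (Fin n) k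
    let I : Ideal R :=
      Ideal.span ((Set.range fun i : Fin n => X i ^ a) ∪ {(∏ i, X i) ^ b})
    let xn : R := X (⟨n - 1, by omega⟩ : Fin n)
    let Q : Ideal R :=
      Ideal.span ({p : R | ∃ i : Fin n, (i : ℕ) < n - 1 ∧ p = X i ^ a - xn ^ a} ∪
        {(∏ i, X i) ^ b})
    Q ≤ I ∧ I ^ n = Q * I ^ (n - 1) ∧ xn ^ ((n - 1) * a) ∉ Q * I ^ (n - 2) ∧
      sInf {r : ℕ | I ^ (r + 1) = Q * I ^ r} = n - 1 := by
  have hlast (i : Fin n) : (i : ℕ) < n - 1 ↔ i ≠ ⟨n - 1, by omega⟩ := by grind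
  obtain ⟨hQI, hpow, hX, hred⟩ := stmt15_general (A := k) (⟨n - 1, by omega⟩ : Fin n) hb
    (by simpa only [Fintype.card_fin] using hnb.le)
  simp only [Fintype.card_fin] at hpow hX hred
  simpa only [hlast] using ⟨hQI, hpow, fun h ↦ hX (Ideal.mul_le_left h), hred⟩
end
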